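/- For every fixed integer r ≥ 2 there exists a constant c = c(r) > 0 such that for all n ≥ 2 one has t^(r)(n) ≥ c · n^{(3/5)·(1/(2^{r-1}-1))}; that is, every ordered r-matching of size n contains a pair of twins of size at least c · n^{3/(5(2^{r-1}-1))}. -/

import Mathlib

/-- A (sub-)matching: a finite set of pairwise disjoint `r`-element subsets
("edges") of the linearly ordered vertex set `ℕ`. -/
def IsMatching (r : ℕ) (M : Finset (Finset ℕ)) : Prop :=
  (∀ e ∈ M, e.card = r) ∧ ∀ e ∈ M, ∀ f ∈ M, e ≠ f → Disjoint e f

/-- The vertex support of a matching: the union of its edges. -/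
def mSupport (M : Finset (Finset ℕ)) : Finset ℕ := M.sup id

/-- An ordered `r`-matching of size `n`: `n` pairwise disjoint `r`-element edges
partitioning `[rn] = {1, …, rn}`. -/
def IsOrderedMatching (r n : ℕ) (M : Finset (Finset ℕ)) : Prop :=
  IsMatching r M ∧ M.card = n ∧ mSupport M = Finset.Icc 1 (r * n)

/-- Two ordered matchings are isomorphic if some (equivalently, the unique)
order-preserving bijection between their vertex supports maps edges onto edges. -/
def MatchIso (M N : Finset (Finset ℕ)) : Prop :=
  ∃ f : ℕ → ℕ, Set.BijOn f (mSupport M : Set ℕ) (mSupport N : Set ℕ) ∧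
    (∀ x ∈ mSupport M, ∀ y ∈ mSupport M, x < y → f x < f y) ∧
    N = M.image fun e => e.image f

/-- `M` contains twins of size `k`: a pair of vertex-disjoint isomorphic
sub-matchings of `M`, each with `k` edges. -/
def HasTwins (M : Finset (Finset ℕ)) (k : ℕ) : Prop :=
  ∃ M₁ M₂ : Finset (Finset ℕ), M₁ ⊆ M ∧ M₂ ⊆ M ∧
    Disjoint (mSupport M₁) (mSupport M₂) ∧ MatchIso M₁ M₂ ∧
    M₁.card = k ∧ M₂.card = k

/-- `t(M)`: the maximum size of twins in `M`. -/
noncomputable def twinMax (M : Finset (Finset ℕ)) : ℕ := sSup {k | HasTwins M k}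

/-- `t^(r)(n)`: the minimum of `t(M)` over all ordered `r`-matchings of size `n`. -/
noncomputable def minTwins (r n : ℕ) : ℕ :=
  sInf {t | ∃ M, IsOrderedMatching r n M ∧ twinMax M = t}

/-- A permutation `π` of `[n]` has twins of length `k`: two order-isomorphic
subsequences occupying disjoint sets of positions. -/
def PermTwins {n : ℕ} (π : Equiv.Perm (Fin n)) (k : ℕ) : Prop :=
  ∃ a b : Fin k → Fin n, StrictMono a ∧ StrictMono b ∧
    (∀ i j, a i ≠ b j) ∧ ∀ i j, (π (a i) < π (a j) ↔ π (b i) < π (b j))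

/-- `τ(n)`: the largest `k` such that every permutation of `[n]` has twins of length `k`. -/
noncomputable def permTau (n : ℕ) : ℕ :=
  sSup {k | ∀ π : Equiv.Perm (Fin n), PermTwins π k}

/-- An `r`-pattern, represented by its canonical representative: an ordered
`r`-matching of size `2` (on the vertex set `[2r]`). Every isomorphism class of
ordered `r`-matchings of size `2` contains exactly one such representative. -/
def IsPattern (r : ℕ) (P : Finset (Finset ℕ)) : Prop := IsOrderedMatching r 2 P

/-- A `P`-clique: a matching all of whose pairs of (distinct) edges form the pattern `P`. -/
def IsPClique (P M : Finset (Finset ℕ)) : Prop :=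
  ∀ e ∈ M, ∀ f ∈ M, e ≠ f → MatchIso {e, f} P

/-- `L(M)`: the size of the largest sub-matching of `M` that is a `P`-clique,
over all `r`-patterns `P`. -/
noncomputable def cliqueMax (r : ℕ) (M : Finset (Finset ℕ)) : ℕ :=
  sSup {k | ∃ P, IsPattern r P ∧ ∃ M' ⊆ M, IsPClique P M' ∧ M'.card = k}

/-- `L_r(n)`: the minimum of `L(M)` over all ordered `r`-matchings of size `n`. -/
noncomputable def minClique (r n : ℕ) : ℕ :=
  sInf {l | ∃ M, IsOrderedMatching r n M ∧ cliqueMax r M = l}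

/-! Twins in an ordered matching are twins for the colouring of pairs of edges by their relative
position, and such twins are found by reduction to permutations.

*Cliques.* Cut the first `r - 1` vertices of all edges into blocks, at first a single one. Apply
Dilworth's theorem to the orders of comparability on every block in prescribed directions: either
there is a long chain, or many edges no two of which are comparable on all blocks. Then a vertex of
one edge falls inside a block of another, and a popular such vertex splits this block for many
edges. So, up to constants, `n ^ (1 / (2 ^ (r - 1) - 1))` edges form a chain.

*The last vertex.* Cut a chain by the value of the last vertex. Either many edges precede many
others in their final blocks, and twins found on the two sides can be concatenated, which preserves
the exponent `3 / 5` since `27 ≤ 32`; or for many edges the cut separates the last vertex from the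
others, and twins amount to twins in the permutation comparing first and last vertices.

*Permutations.* Blur the values to letters. If each of `m` letters occurs three times, then the
three sequences of occurrences induce three orders of the letters, two of which agree on `m ^ (1/3)`
letters by Erdős–Szekeres, and this gives two disjoint equal subwords. Twins in consecutive windows,
built from distinct letters, can be concatenated; using windows of length `8 ^ i` for increasing `i`
yields twins of size `n ^ (3 / 5)`. -/

section Posets

open Finset

variable {α : Type*}

theorem exists_antichain_card_le_card_image_mul {r : α → α → Prop} {S : Finset α} {h : α → ℕ}
    (hr : ∀ a ∈ S, ∀ b ∈ S, r a b → h a < h b) :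
    ∃ A ⊆ S, IsAntichain r (A : Set α) ∧ #S ≤ #(S.image h) * #A := by
  rcases S.eq_empty_or_nonempty with rfl | hS
  · exact ⟨∅, subset_rfl, by simp, by simp⟩
  obtain ⟨k, -, hk⟩ :=
    exists_max_image (S.image h) (fun k => #{a ∈ S | h a = k}) (hS.image h)
  refine ⟨{a ∈ S | h a = k}, filter_subset _ _, ?_, ?_⟩
  · intro a ha b hb _ hab
    simp only [mem_coe, mem_filter] at ha hb
    exact (hr a ha.1 b hb.1 hab).ne (ha.2.trans hb.2.symm)
  · rw [mul_comm]
    exact card_le_mul_card_image S _ hk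

theorem exists_chain_antichain_card_le_mul (r : α → α → Prop) [IsStrictOrder α r] (S : Finset α) :
    ∃ C ⊆ S, ∃ A ⊆ S, IsChain r (C : Set α) ∧ IsAntichain r (A : Set α) ∧ #S ≤ #C * #A := by
  classical
  rcases S.eq_empty_or_nonempty with rfl | hS
  · exact ⟨∅, subset_rfl, ∅, subset_rfl, by simp, by simp, by simp⟩
  let chainsTo (a : α) : Finset (Finset α) :=
    {C ∈ S.powerset | IsChain r (C : Set α) ∧ a ∈ C ∧ ∀ b ∈ C, b ≠ a → r b a}
  let height (a : α) : ℕ := (chainsTo a).sup card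
  have singleton_mem {a : α} (ha : a ∈ S) : {a} ∈ chainsTo a := by simp [chainsTo, ha]
  have exists_card_eq_height {a : α} (ha : a ∈ S) : ∃ C ∈ chainsTo a, height a = #C :=
    exists_mem_eq_sup _ ⟨_, singleton_mem ha⟩ card
  have height_lt (a : α) (ha : a ∈ S) (b : α) (hb : b ∈ S) (hab : r a b) :
      height a < height b := by
    obtain ⟨C, hC, hCa⟩ := exists_card_eq_height ha
    simp only [chainsTo, mem_filter, mem_powerset] at hC
    obtain ⟨hCS, hchain, -, htop⟩ := hC
    have hlt (c : α) (hc : c ∈ C) : r c b := by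
      rcases eq_or_ne c a with rfl | hca
      · exact hab
      · exact _root_.trans (htop c hc hca) hab
    have hbC : b ∉ C := fun h => irrefl b (hlt b h)
    have hmem : insert b C ∈ chainsTo b := by
      simp only [chainsTo, mem_filter, mem_powerset, coe_insert]
      exact ⟨insert_subset hb hCS, hchain.insert fun c hc _ => Or.inr (hlt c hc),
        mem_insert_self b C, fun c hc hcb => hlt c (mem_of_mem_insert_of_ne hc hcb)⟩
    calc height a = #C := hCa
      _ < #(insert b C) := by simp [card_insert_of_notMem hbC]
      _ ≤ height b := le_sup (f := card) hmem
  obtain ⟨top, htopS, htop⟩ := exists_max_image S height hS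
  obtain ⟨C, hC, hCtop⟩ := exists_card_eq_height htopS
  simp only [chainsTo, mem_filter, mem_powerset] at hC
  have himage : S.image height ⊆ Icc 1 #C := by
    simp only [image_subset_iff, mem_Icc]
    exact fun a ha => ⟨le_sup (f := card) (singleton_mem ha), (htop a ha).trans_eq hCtop⟩
  obtain ⟨A, hAS, hA, hcard⟩ := exists_antichain_card_le_card_image_mul height_lt
  refine ⟨C, hC.1, A, hAS, hC.2.1, hA, hcard.trans ?_⟩
  gcongr
  simpa using card_le_card himage

theorem exists_common_antichain_card_le_pow_mul {ι : Type*} (r : ι → α → α → Prop)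
    [∀ i, IsStrictOrder α (r i)] {S : Finset α} {t : ℕ} (I : Finset ι)
    (hr : ∀ i ∈ I, ∀ C ⊆ S, IsChain (r i) (C : Set α) → #C ≤ t) :
    ∃ A ⊆ S, (∀ i ∈ I, IsAntichain (r i) (A : Set α)) ∧ #S ≤ t ^ #I * #A := by
  classical
  induction I using Finset.induction_on with
  | empty => exact ⟨S, subset_rfl, by simp, by simp⟩
  | insert i I hi ih =>
    obtain ⟨A, hAS, hA, hcard⟩ := ih fun j hj => hr j (mem_insert_of_mem hj)
    obtain ⟨C, hCA, B, hBA, hC, hB, hmul⟩ := exists_chain_antichain_card_le_mul (r i) A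
    refine ⟨B, hBA.trans hAS, ?_, ?_⟩
    · simp only [mem_insert, forall_eq_or_imp]
      exact ⟨hB, fun j hj => (hA j hj).subset (coe_subset.2 hBA)⟩
    · calc #S ≤ t ^ #I * #A := hcard
        _ ≤ t ^ #I * (t * #B) := by
          gcongr
          exact hmul.trans (by gcongr; exact hr i (mem_insert_self i I) C (hCA.trans hAS) hC)
        _ = t ^ #(insert i I) * #B := by rw [card_insert_of_notMem hi]; ring

end Posets

section ErdosSzekeres

open Finset

variable {α β γ δ : Type*} [LinearOrder β] [LinearOrder γ] [LinearOrder δ]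

/-- `f` and `g` order the elements of `S` in the same way. -/
def SameOrderOn (f : α → β) (g : α → γ) (S : Finset α) : Prop :=
  ∀ a ∈ S, ∀ b ∈ S, f a < f b ↔ g a < g b

/-- `f` and `g` order the elements of `S` in opposite ways. -/
def OppositeOrderOn (f : α → β) (g : α → γ) (S : Finset α) : Prop :=
  ∀ a ∈ S, ∀ b ∈ S, f a < f b ↔ g b < g a

theorem exists_sameOrderOn_oppositeOrderOn {f : α → β} {g : α → γ} {S : Finset α}
    (hf : Set.InjOn f S) (hg : Set.InjOn g S) :
    ∃ C ⊆ S, ∃ A ⊆ S, SameOrderOn f g C ∧ OppositeOrderOn f g A ∧ #S ≤ #C * #A := by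
  let r (a b : α) : Prop := f a < f b ∧ g a < g b
  have : IsStrictOrder α r :=
    { irrefl := fun a h => lt_irrefl _ h.1
      trans := fun a b c h h' => ⟨h.1.trans h'.1, h.2.trans h'.2⟩ }
  obtain ⟨C, hCS, A, hAS, hC, hA, hcard⟩ := exists_chain_antichain_card_le_mul r S
  refine ⟨C, hCS, A, hAS, fun a ha b hb => ?_, fun a ha b hb => ?_, hcard⟩
  · rcases eq_or_ne a b with rfl | hab
    · simp
    · rcases hC ha hb hab with h | h
      · exact iff_of_true h.1 h.2
      · exact iff_of_false h.1.asymm h.2.asymm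
  · rcases eq_or_ne a b with rfl | hab
    · simp
    · have hfab : f a ≠ f b := hf.ne (hAS ha) (hAS hb) hab
      have hgab : g a ≠ g b := hg.ne (hAS ha) (hAS hb) hab
      have h₁ := hA ha hb hab
      have h₂ := hA hb ha hab.symm
      simp only [Pi.compl_apply, compl_iff_not, r] at h₁ h₂
      grind

theorem exists_two_sameOrderOn_card_le_pow_three {f : α → β} {g : α → γ} {h : α → δ} {S : Finset α}
    (hf : Set.InjOn f S) (hg : Set.InjOn g S) (hh : Set.InjOn h S) :
    ∃ T ⊆ S, (SameOrderOn f g T ∨ SameOrderOn f h T ∨ SameOrderOn g h T) ∧ #S ≤ #T ^ 3 := by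
  obtain ⟨C₁, hC₁, A₁, hA₁, hfg, hfg', hcard₁⟩ := exists_sameOrderOn_oppositeOrderOn hf hg
  obtain ⟨C₂, hC₂, A₂, hA₂, hfh, hfh', hcard₂⟩ :=
    exists_sameOrderOn_oppositeOrderOn (hf.mono hA₁) (hh.mono hA₁)
  have hgh : SameOrderOn g h A₂ := fun a ha b hb => by
    rw [← hfg' b (hA₂ hb) a (hA₂ ha), hfh' b hb a ha]
  by_contra! hsmall
  have h₁ := hsmall C₁ hC₁ (.inl hfg)
  have h₂ := hsmall C₂ (hC₂.trans hA₁) (.inr (.inl hfh))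
  have h₃ := hsmall A₂ (hA₂.trans hA₁) (.inr (.inr hgh))
  have hcard : #S ≤ #C₁ * #C₂ * #A₂ := by
    rw [mul_assoc]
    exact hcard₁.trans (Nat.mul_le_mul_left _ hcard₂)
  have hcubes : (#C₁ * #C₂ * #A₂) ^ 3 < #S ^ 3 := by
    calc (#C₁ * #C₂ * #A₂) ^ 3 = #C₁ ^ 3 * #C₂ ^ 3 * #A₂ ^ 3 := by ring
      _ < #S * #S * #S := by gcongr
      _ = #S ^ 3 := by ring
  exact (Nat.pow_le_pow_left hcard 3).not_gt hcubes

end ErdosSzekeres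

section Rank

open Finset

variable {α β : Type*} [LinearOrder β] {S : Finset α} {y : α → β}

/-- The rank of `e` in `S` with respect to the values of `y`, counted from `0`. -/
def rankIn (S : Finset α) (y : α → β) (e : α) : ℕ := #{e' ∈ S | y e' < y e}

theorem rankIn_lt_card {e : α} (he : e ∈ S) : rankIn S y e < #S :=
  card_lt_card (filter_ssubset.2 ⟨e, he, lt_irrefl _⟩)

theorem rankIn_mono {e e' : α} (h : y e ≤ y e') : rankIn S y e ≤ rankIn S y e' :=
  card_le_card (monotone_filter_right S fun _ _ ha => lt_of_lt_of_le ha h)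

theorem rankIn_lt_rankIn {e e' : α} (he : e ∈ S) (h : y e < y e') :
    rankIn S y e < rankIn S y e' := by
  refine card_lt_card ((monotone_filter_right S fun _ _ ha => lt_trans ha h).ssubset_of_mem_notMem
    (a := e) ?_ ?_) <;> simp [he, h]

theorem rankIn_lt_rankIn_iff {e e' : α} (he : e ∈ S) :
    rankIn S y e < rankIn S y e' ↔ y e < y e' :=
  ⟨fun h => not_le.1 fun h' => (rankIn_mono h').not_gt h, rankIn_lt_rankIn he⟩

theorem injOn_rankIn (hy : Set.InjOn y S) : Set.InjOn (rankIn S y) S := by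
  intro e he e' he' h
  by_contra hne
  rcases (hy.ne he he' hne).lt_or_gt with hlt | hlt
  · exact (rankIn_lt_rankIn he hlt).ne h
  · exact (rankIn_lt_rankIn he' hlt).ne' h

theorem exists_rankIn_eq (hy : Set.InjOn y S) {k : ℕ} (hk : k < #S) :
    ∃ e ∈ S, rankIn S y e = k := by
  have hmaps : Set.MapsTo (rankIn S y) S (range #S) := fun e he =>
    mem_coe.2 (mem_range.2 (rankIn_lt_card he))
  simpa using surjOn_of_injOn_of_card_le _ hmaps (injOn_rankIn hy) (by simp) (by simpa using hk)

end Rank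

section ColorTwins

open Finset

variable {α γ : Type*} {c : α → α → γ}

/-- Given a colouring `c` of the ordered pairs from `S`, the map `φ` carries `A ⊆ S` to a disjoint
colour-isomorphic copy inside `S`. -/
structure IsTwinMap (c : α → α → γ) (S A : Finset α) (φ : α → α) : Prop where
  subset : A ⊆ S
  map_mem : ∀ e ∈ A, φ e ∈ S
  map_notMem : ∀ e ∈ A, φ e ∉ A
  injOn : Set.InjOn φ A
  map_color : ∀ e ∈ A, ∀ e' ∈ A, c (φ e) (φ e') = c e e'

/-- `S` contains two disjoint sets of size `k` that are isomorphic with respect to the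
colouring `c` of ordered pairs. -/
def HasColorTwins (c : α → α → γ) (S : Finset α) (k : ℕ) : Prop :=
  ∃ A φ, IsTwinMap c S A φ ∧ #A = k

theorem HasColorTwins.mono {S T : Finset α} {k : ℕ} (h : HasColorTwins c S k) (hST : S ⊆ T) :
    HasColorTwins c T k := by
  obtain ⟨A, φ, hφ, hA⟩ := h
  exact ⟨A, φ, { hφ with
    subset := hφ.subset.trans hST
    map_mem := fun e he => hST (hφ.map_mem e he) }, hA⟩

theorem hasColorTwins_one {S : Finset α} (hc : ∀ e ∈ S, ∀ e' ∈ S, c e e = c e' e')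
    (hS : 2 ≤ #S) : HasColorTwins c S 1 := by
  obtain ⟨a, ha, b, hb, hab⟩ := one_lt_card.1 hS
  exact ⟨{a}, fun _ => b, ⟨by simpa, by simpa, by simpa using hab.symm, by simp,
    by simpa using hc b hb a ha⟩, card_singleton a⟩

theorem HasColorTwins.union {L R S : Finset α} {k l : ℕ} (hLR : Disjoint L R) (hL : L ⊆ S)
    (hR : R ⊆ S)
    (hc : ∀ e ∈ L, ∀ f ∈ L, ∀ e' ∈ R, ∀ f' ∈ R, c e e' = c f f' ∧ c e' e = c f' f)
    (hk : HasColorTwins c L k) (hl : HasColorTwins c R l) : HasColorTwins c S (k + l) := by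
  classical
  obtain ⟨A, φ, hφ, rfl⟩ := hk
  obtain ⟨B, ψ, hψ, rfl⟩ := hl
  let χ (e : α) : α := if e ∈ L then φ e else ψ e
  have χ_left {e : α} (he : e ∈ A) : χ e = φ e := if_pos (hφ.subset he)
  have χ_right {e : α} (he : e ∈ B) : χ e = ψ e :=
    if_neg (disjoint_right.1 hLR (hψ.subset he))
  have notMem_of_mem {e e' : α} (he : e ∈ L) (he' : e' ∈ R) : e ≠ e' :=
    fun h => disjoint_left.1 hLR he (h ▸ he')
  refine ⟨A ∪ B, χ, ⟨?_, ?_, ?_, ?_, ?_⟩,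
    card_union_of_disjoint (hLR.mono hφ.subset hψ.subset)⟩
  · exact union_subset (hφ.subset.trans hL) (hψ.subset.trans hR)
  · simp only [forall_mem_union]
    exact ⟨fun e he => χ_left he ▸ hL (hφ.map_mem e he),
      fun e he => χ_right he ▸ hR (hψ.map_mem e he)⟩
  · simp only [forall_mem_union, notMem_union]
    refine ⟨fun e he => ?_, fun e he => ?_⟩
    · rw [χ_left he]
      exact ⟨hφ.map_notMem e he,
        fun h => notMem_of_mem (hφ.map_mem e he) (hψ.subset h) rfl⟩
    · rw [χ_right he]
      exact ⟨fun h => notMem_of_mem (hφ.subset h) (hψ.map_mem e he) rfl,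
        hψ.map_notMem e he⟩
  · rw [coe_union, Set.injOn_union (mod_cast hLR.mono hφ.subset hψ.subset)]
    refine ⟨hφ.injOn.congr fun e he => (χ_left he).symm,
      hψ.injOn.congr fun e he => (χ_right he).symm, fun e he e' he' => ?_⟩
    rw [χ_left he, χ_right he']
    exact notMem_of_mem (hφ.map_mem e he) (hψ.map_mem e' he')
  · simp only [forall_mem_union]
    refine ⟨fun e he => ⟨fun e' he' => ?_, fun e' he' => ?_⟩,
      fun e he => ⟨fun e' he' => ?_, fun e' he' => ?_⟩⟩
    · rw [χ_left he, χ_left he', hφ.map_color e he e' he']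
    · rw [χ_left he, χ_right he']
      exact (hc _ (hφ.map_mem e he) _ (hφ.subset he) _ (hψ.map_mem e' he') _ (hψ.subset he')).1
    · rw [χ_right he, χ_left he']
      exact (hc _ (hφ.map_mem e' he') _ (hφ.subset he') _ (hψ.map_mem e he) _ (hψ.subset he)).2
    · rw [χ_right he, χ_right he', hψ.map_color e he e' he']

end ColorTwins

section Words

open Finset

/-- A finite word over the alphabet `Λ`, possibly with gaps: the elements of `carrier` are placed
at distinct positions in `ℕ`, and each of them carries a letter. -/
structure FiniteWord (α Λ : Type*) where
  carrier : Finset α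
  pos : α → ℕ
  injOn_pos : Set.InjOn pos carrier
  letter : α → Λ

namespace FiniteWord

variable {α Λ : Type*} [DecidableEq Λ] (w : FiniteWord α Λ)

/-- The occurrences of the letter `l` in the window `[a, b)`. -/
def occ (a b : ℕ) (l : Λ) : Finset α :=
  {e ∈ w.carrier | w.pos e ∈ Ico a b ∧ w.letter e = l}

/-- The window `[a, b)` contains two disjoint subwords which are equal, and in which exactly the
letters of `U` occur, each of them once. -/
def HasLetterTwins (a b : ℕ) (U : Finset Λ) : Prop :=
  ∃ p q : Λ → α, (∀ l ∈ U, p l ∈ w.occ a b l ∧ q l ∈ w.occ a b l ∧ p l ≠ q l) ∧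
    SameOrderOn (w.pos ∘ p) (w.pos ∘ q) U

/-- The number of disjoint triples of equal letters, taken from `A`, in the window `[a, b)`. -/
def triples (a b : ℕ) (A : Finset Λ) : ℕ := ∑ l ∈ A, #(w.occ a b l) / 3

variable {w} {a b c : ℕ} {l : Λ}

theorem mem_occ {e : α} :
    e ∈ w.occ a b l ↔ e ∈ w.carrier ∧ (a ≤ w.pos e ∧ w.pos e < b) ∧ w.letter e = l := by
  simp only [occ, mem_filter, mem_Ico]

theorem occ_mono {a' b' : ℕ} (ha : a' ≤ a) (hb : b ≤ b') : w.occ a b l ⊆ w.occ a' b' l := by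
  intro e he
  rw [mem_occ] at he ⊢
  exact ⟨he.1, ⟨ha.trans he.2.1.1, he.2.1.2.trans_le hb⟩, he.2.2⟩

theorem injOn_pos_comp {U : Finset Λ} {p : Λ → α} (hp : ∀ l ∈ U, p l ∈ w.occ a b l) :
    Set.InjOn (w.pos ∘ p) U := fun l hl l' hl' h => by
  have hocc := mem_occ.1 (hp l hl)
  have hocc' := mem_occ.1 (hp l' hl')
  rw [← hocc.2.2, ← hocc'.2.2, w.injOn_pos hocc.1 hocc'.1 h]

theorem card_occ_le_add : #(w.occ a c l) ≤ #(w.occ a b l) + #(w.occ b c l) := by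
  classical
  refine (card_le_card fun e he => ?_).trans (card_union_le _ _)
  rw [mem_occ] at he
  rw [mem_union, mem_occ, mem_occ]
  grind

theorem sum_card_occ_le (w : FiniteWord α Λ) (a b : ℕ) (A : Finset Λ) :
    ∑ l ∈ A, #(w.occ a b l) ≤ b - a := by
  classical
  have hdisj : (A : Set Λ).PairwiseDisjoint (w.occ a b) := fun l _ l' _ hll' =>
    disjoint_left.2 fun e he he' => hll' ((mem_occ.1 he).2.2.symm.trans (mem_occ.1 he').2.2)
  rw [← card_biUnion hdisj, ← Nat.card_Ico]
  refine card_le_card_of_injOn w.pos (fun e he => ?_) (w.injOn_pos.mono fun e he => ?_) <;>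
  · obtain ⟨l, -, hl⟩ := mem_biUnion.1 he
    have := mem_occ.1 hl
    simp [this]

theorem triples_mono {A B : Finset Λ} (h : A ⊆ B) : w.triples a b A ≤ w.triples a b B :=
  sum_le_sum_of_subset h

theorem triples_union_le (A B : Finset Λ) :
    w.triples a b (A ∪ B) ≤ w.triples a b A + w.triples a b B := by
  have := sum_union_inter (s₁ := A) (s₂ := B) (f := fun l => #(w.occ a b l) / 3)
  unfold triples
  omega

theorem triples_le_mul_card {h : ℕ} (hw : ∀ l, #(w.occ a b l) ≤ h) (A : Finset Λ) :
    w.triples a b A ≤ h * #A := by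
  rw [mul_comm]
  exact sum_le_card_nsmul _ _ _ fun l _ => (Nat.div_le_self _ _).trans (hw l)

theorem hasLetterTwins_empty [Nonempty α] : w.HasLetterTwins a b ∅ :=
  ⟨fun _ => Classical.arbitrary α, fun _ => Classical.arbitrary α, by simp, by simp [SameOrderOn]⟩

theorem HasLetterTwins.union {U V : Finset Λ} (hab : a ≤ b) (hbc : b ≤ c)
    (hU : w.HasLetterTwins a b U) (hV : w.HasLetterTwins b c V) :
    w.HasLetterTwins a c (U ∪ V) := by
  obtain ⟨p, q, hpq, hord⟩ := hU
  obtain ⟨p', q', hpq', hord'⟩ := hV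
  refine ⟨fun l => if l ∈ U then p l else p' l, fun l => if l ∈ U then q l else q' l,
    fun l hl => ?_, fun l hl l' hl' => ?_⟩
  · by_cases hlU : l ∈ U
    · simp only [hlU, if_true]
      exact ⟨occ_mono le_rfl hbc (hpq l hlU).1, occ_mono le_rfl hbc (hpq l hlU).2.1,
        (hpq l hlU).2.2⟩
    · have hlV : l ∈ V := (mem_union.1 hl).resolve_left hlU
      simp only [hlU, if_false]
      exact ⟨occ_mono hab le_rfl (hpq' l hlV).1, occ_mono hab le_rfl (hpq' l hlV).2.1,
        (hpq' l hlV).2.2⟩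
  · have before {l : Λ} (hl : l ∈ U) : w.pos (p l) < b ∧ w.pos (q l) < b :=
      ⟨(mem_occ.1 (hpq l hl).1).2.1.2, (mem_occ.1 (hpq l hl).2.1).2.1.2⟩
    have after {l : Λ} (hl : l ∈ U ∪ V) (hlU : l ∉ U) :
        b ≤ w.pos (p' l) ∧ b ≤ w.pos (q' l) := by
      have hlV : l ∈ V := (mem_union.1 hl).resolve_left hlU
      exact ⟨(mem_occ.1 (hpq' l hlV).1).2.1.1, (mem_occ.1 (hpq' l hlV).2.1).2.1.1⟩
    simp only [Function.comp_apply]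
    by_cases hlU : l ∈ U <;> by_cases hlU' : l' ∈ U <;> simp only [hlU, hlU', if_true, if_false]
    · exact hord l hlU l' hlU'
    · have := before hlU; have := after hl' hlU'; omega
    · have := before hlU'; have := after hl hlU; omega
    · exact hord' l ((mem_union.1 hl).resolve_left hlU) l' ((mem_union.1 hl').resolve_left hlU')

theorem exists_hasLetterTwins_card_le_pow_three [Nonempty α] {V : Finset Λ}
    (hV : ∀ l ∈ V, 3 ≤ #(w.occ a b l)) :
    ∃ U ⊆ V, w.HasLetterTwins a b U ∧ #V ≤ #U ^ 3 := by
  have hthree (l : Λ) (hl : l ∈ V) := two_lt_card.1 (hV l hl)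
  choose! p hp q hq r hr hpq hpr hqr using hthree
  obtain ⟨U, hUV, hord, hcard⟩ := exists_two_sameOrderOn_card_le_pow_three
    (injOn_pos_comp hp) (injOn_pos_comp hq) (injOn_pos_comp hr)
  refine ⟨U, hUV, ?_, hcard⟩
  rcases hord with hord | hord | hord
  · exact ⟨p, q, fun l hl => ⟨hp l (hUV hl), hq l (hUV hl), hpq l (hUV hl)⟩, hord⟩
  · exact ⟨p, r, fun l hl => ⟨hp l (hUV hl), hr l (hUV hl), hpr l (hUV hl)⟩, hord⟩
  · exact ⟨q, r, fun l hl => ⟨hq l (hUV hl), hr l (hUV hl), hqr l (hUV hl)⟩, hord⟩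

theorem card_occ_mul_le (w : FiniteWord α Λ) (a B j : ℕ) (l : Λ) :
    #(w.occ a (a + j * B) l) ≤
      3 * ∑ t ∈ range j, #(w.occ (a + t * B) (a + t * B + B) l) / 3 + 2 * j := by
  induction j with
  | zero => simp [occ]
  | succ j ih =>
    have hadd : #(w.occ a (a + j * B + B) l) ≤ _ := card_occ_le_add (b := a + j * B)
    rw [sum_range_succ, Nat.succ_mul, ← add_assoc]
    omega

/-- In every window of length `B` there are letter twins, with letters from any prescribed
alphabet, that cover all but `K` triples per letter used. -/
def TwinsAtScale (w : FiniteWord α Λ) (K B : ℕ) : Prop :=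
  ∀ a A, ∃ U ⊆ A, w.HasLetterTwins a (a + B) U ∧ w.triples a (a + B) (A \ U) ≤ K * #U

theorem twinsAtScale_one [Nonempty α] (w : FiniteWord α Λ) (K : ℕ) : w.TwinsAtScale K 1 := by
  refine fun a A => ⟨∅, empty_subset A, hasLetterTwins_empty, ?_⟩
  refine (sum_eq_zero fun l _ => Nat.div_eq_of_lt ?_).le.trans (Nat.zero_le _)
  have := w.sum_card_occ_le a (a + 1) {l}
  simp only [sum_singleton] at this
  omega

theorem TwinsAtScale.mono {K K' B : ℕ} (h : w.TwinsAtScale K B) (hK : K ≤ K') :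
    w.TwinsAtScale K' B := fun a A => by
  obtain ⟨U, hUA, hU, hcard⟩ := h a A
  exact ⟨U, hUA, hU, hcard.trans (by gcongr)⟩

theorem TwinsAtScale.exists_consecutive [Nonempty α] {K B : ℕ} (h : w.TwinsAtScale K B)
    (a j : ℕ) (A : Finset Λ) :
    ∃ U ⊆ A, w.HasLetterTwins a (a + j * B) U ∧
      ∑ t ∈ range j, w.triples (a + t * B) (a + t * B + B) (A \ U) ≤ K * #U := by
  induction j with
  | zero => exact ⟨∅, empty_subset A, hasLetterTwins_empty, by simp⟩
  | succ j ih =>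
    obtain ⟨U, hUA, hU, hcard⟩ := ih
    obtain ⟨V, hVA, hV, hcard'⟩ := h (a + j * B) (A \ U)
    have hUV : Disjoint U V := disjoint_sdiff.mono_right hVA
    refine ⟨U ∪ V, union_subset hUA (hVA.trans sdiff_subset), ?_, ?_⟩
    · rw [Nat.succ_mul, ← add_assoc]
      exact hU.union (Nat.le_add_right _ _) (Nat.le_add_right _ _) hV
    · rw [sum_range_succ, card_union_of_disjoint hUV, mul_add]
      gcongr
      · refine (sum_le_sum fun t _ => triples_mono ?_).trans hcard
        exact sdiff_subset_sdiff subset_rfl subset_union_left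
      · rwa [← sup_eq_union, ← sdiff_sdiff_left]

theorem triples_mul_le (w : FiniteWord α Λ) (a B j : ℕ) (A : Finset Λ) :
    w.triples a (a + j * B) A ≤
      ∑ t ∈ range j, w.triples (a + t * B) (a + t * B + B) A +
        2 * j / 3 * #{l ∈ A | 3 ≤ #(w.occ a (a + j * B) l)} := by
  simp only [triples]
  rw [sum_comm, card_filter, mul_sum, ← sum_add_distrib]
  refine sum_le_sum fun l _ => ?_
  have := w.card_occ_mul_le a B j l
  split_ifs <;> omega

theorem TwinsAtScale.step [Nonempty α] {K B s h : ℕ} (hw : w.TwinsAtScale K B)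
    (hs : 8 * B ≤ s ^ 3) (hh : ∀ a b l, #(w.occ a b l) ≤ h) (hhK : h ≤ K) :
    w.TwinsAtScale (K + 10 * s ^ 2) (8 * B) := by
  intro a A
  obtain ⟨U, hUA, hU, htriples⟩ := hw.exists_consecutive a 8 A
  let V : Finset Λ := {l ∈ A \ U | 3 ≤ #(w.occ a (a + 8 * B) l)}
  have hV3 (l : Λ) (hl : l ∈ V) : 3 ≤ #(w.occ a (a + 8 * B) l) := (mem_filter.1 hl).2
  have hleft : w.triples a (a + 8 * B) (A \ U) ≤ K * #U + 5 * #V :=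
    (w.triples_mul_le a B 8 (A \ U)).trans (Nat.add_le_add_right htriples _)
  obtain ⟨U', hUV, hU', hVcube⟩ := exists_hasLetterTwins_card_le_pow_three hV3
  have hVs : #V ≤ s ^ 2 * #U' := by
    have hVB : #V ≤ s ^ 3 := by
      have h₁ : #V * 3 ≤ _ := card_nsmul_le_sum V _ 3 hV3
      have h₂ := w.sum_card_occ_le a (a + 8 * B) V
      omega
    rcases le_total s #U' with hsU | hsU
    · exact hVB.trans ((pow_succ s 2).trans_le (by gcongr))
    · exact hVcube.trans ((pow_succ #U' 2).trans_le (by gcongr))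
  -- If `U'` is twice as large as `U`, it pays for all triples and replaces `U`; otherwise `U` is
  -- large enough to pay for the triples of `V`.
  rcases le_or_gt (2 * #U) #U' with hcase | hcase
  · refine ⟨U', hUV.trans ((filter_subset _ _).trans sdiff_subset), hU', ?_⟩
    have hsub : A \ U' ⊆ A \ U ∪ U := by
      intro l hl
      simp only [mem_union, mem_sdiff] at hl ⊢
      tauto
    have hUh : w.triples a (a + 8 * B) U ≤ K * #U :=
      (triples_le_mul_card (hh _ _) U).trans (by gcongr)
    have hKU : K * (2 * #U) ≤ K * #U' := by gcongr
    have := (triples_mono hsub).trans (triples_union_le (w := w) (a := a) (b := a + 8 * B) _ _)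
    nlinarith
  · refine ⟨U, hUA, hU, hleft.trans ?_⟩
    have : s ^ 2 * #U' ≤ s ^ 2 * (2 * #U) := by gcongr
    nlinarith

theorem twinsAtScale_pow [Nonempty α] {h : ℕ} (hh : ∀ a b l, #(w.occ a b l) ≤ h) (i : ℕ) :
    w.TwinsAtScale (h + 16 * 4 ^ i) (8 ^ i) := by
  induction i with
  | zero => exact w.twinsAtScale_one _
  | succ i ih =>
    have hs : 8 * 8 ^ i ≤ (2 ^ (i + 1)) ^ 3 := by
      rw [← pow_mul, mul_comm (i + 1), pow_mul, pow_succ']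
      norm_num
    have hs' : (2 ^ (i + 1)) ^ 2 = 4 * 4 ^ i := by
      rw [← pow_mul, mul_comm (i + 1), pow_mul, pow_succ']
      norm_num
    rw [pow_succ', pow_succ']
    refine (ih.step hs hh (Nat.le_add_right _ _)).mono ?_
    rw [hs']
    omega

theorem TwinsAtScale.exists_card_carrier_le [Nonempty α] {K B h j : ℕ} (hw : w.TwinsAtScale K B)
    (hh : ∀ a b l, #(w.occ a b l) ≤ h) {A : Finset Λ} (hpos : ∀ e ∈ w.carrier, w.pos e < j * B)
    (hletter : ∀ e ∈ w.carrier, w.letter e ∈ A) :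
    ∃ U, w.HasLetterTwins 0 (j * B) U ∧ #w.carrier ≤ (3 * K + h) * #U + 2 * j * #A := by
  obtain ⟨U, hUA, hU, htriples⟩ := hw.exists_consecutive 0 j A
  simp only [zero_add] at hU
  refine ⟨U, hU, ?_⟩
  have hcarrier : #w.carrier = ∑ l ∈ A, #(w.occ 0 (j * B) l) := by
    rw [card_eq_sum_card_fiberwise (f := w.letter) (t := A) fun e he => hletter e he]
    refine sum_congr rfl fun l _ => congrArg card (filter_congr fun e he => ?_)
    simp [hpos e he]
  have hleft : ∑ l ∈ A \ U, #(w.occ 0 (j * B) l) ≤ 3 * (K * #U) + #A * (2 * j) := by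
    calc ∑ l ∈ A \ U, #(w.occ 0 (j * B) l)
        ≤ ∑ l ∈ A \ U, (3 * ∑ t ∈ range j, #(w.occ (0 + t * B) (0 + t * B + B) l) / 3 + 2 * j) :=
          sum_le_sum fun l _ => by simpa only [zero_add] using w.card_occ_mul_le 0 B j l
      _ = 3 * ∑ t ∈ range j, w.triples (0 + t * B) (0 + t * B + B) (A \ U) +
            #(A \ U) * (2 * j) := by
          simp only [triples]
          rw [sum_add_distrib, ← mul_sum, sum_comm, sum_const, smul_eq_mul]
      _ ≤ 3 * (K * #U) + #A * (2 * j) := by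
          gcongr
          exact sdiff_subset
  have hused : ∑ l ∈ U, #(w.occ 0 (j * B) l) ≤ #U * h := sum_le_card_nsmul _ _ _ fun l _ => hh _ _ _
  have := sum_sdiff (f := fun l => #(w.occ 0 (j * B) l)) hUA
  linarith

end FiniteWord

end Words

section Permutations

open Finset

variable {α β γ : Type*} [LinearOrder β] [LinearOrder γ] {S : Finset α} {f : α → β} {g : α → γ}

/-- The permutation of `S` given by the orders of the values of `f` and `g`, blurred to a word:
elements are placed by their `f`-rank, and their letter is the block of length `h` in which their
`g`-rank falls. -/
def rankWord (hf : Set.InjOn f S) (g : α → γ) (h : ℕ) : FiniteWord α ℕ where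
  carrier := S
  pos := rankIn S f
  injOn_pos := injOn_rankIn hf
  letter e := rankIn S g e / h

variable {hf : Set.InjOn f S} {h a b : ℕ}

theorem card_occ_rankWord_le (hg : Set.InjOn g S) (hh : 0 < h) (l : ℕ) :
    #((rankWord hf g h).occ a b l) ≤ h := by
  have hmaps : Set.MapsTo (rankIn S g) ((rankWord hf g h).occ a b l) (Ico (l * h) (l * h + h)) := by
    intro e he
    have hl := (FiniteWord.mem_occ.1 he).2.2
    rw [mem_coe, mem_Ico, ← Nat.succ_mul, ← Nat.le_div_iff_mul_le hh, ← Nat.div_lt_iff_lt_mul hh]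
    exact ⟨hl.ge, Nat.lt_succ_of_le hl.le⟩
  have hinj : Set.InjOn (rankIn S g) ((rankWord hf g h).occ a b l) :=
    (injOn_rankIn hg).mono fun e he => (FiniteWord.mem_occ.1 he).1
  simpa using card_le_card_of_injOn _ hmaps hinj

theorem lt_iff_lt_of_mem_occ_rankWord {l l' : ℕ} {e e' : α} (hl : l ≠ l')
    (he : e ∈ (rankWord hf g h).occ a b l) (he' : e' ∈ (rankWord hf g h).occ a b l') :
    g e < g e' ↔ l < l' := by
  obtain ⟨heS, -, rfl⟩ := FiniteWord.mem_occ.1 he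
  obtain ⟨-, -, rfl⟩ := FiniteWord.mem_occ.1 he'
  rw [← rankIn_lt_rankIn_iff heS]
  exact ⟨fun hlt => (Nat.div_le_div_right hlt.le).lt_of_ne hl, Nat.lt_of_div_lt_div⟩

theorem FiniteWord.HasLetterTwins.hasColorTwins {U : Finset ℕ}
    (hU : (rankWord hf g h).HasLetterTwins a b U) :
    HasColorTwins (fun e e' => (f e < f e', g e < g e')) S #U := by
  classical
  obtain ⟨p, q, hpq, hord⟩ := hU
  have hpocc (l : ℕ) (hl : l ∈ U) := (hpq l hl).1
  have hqocc (l : ℕ) (hl : l ∈ U) := (hpq l hl).2.1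
  have letter_p (l : ℕ) (hl : l ∈ U) := (FiniteWord.mem_occ.1 (hpocc l hl)).2.2
  have letter_q (l : ℕ) (hl : l ∈ U) := (FiniteWord.mem_occ.1 (hqocc l hl)).2.2
  have hpS (l : ℕ) (hl : l ∈ U) : p l ∈ S := (FiniteWord.mem_occ.1 (hpocc l hl)).1
  have hqS (l : ℕ) (hl : l ∈ U) : q l ∈ S := (FiniteWord.mem_occ.1 (hqocc l hl)).1
  refine ⟨U.image p, q ∘ (rankWord hf g h).letter, ⟨?_, ?_, ?_, ?_, ?_⟩, ?_⟩
  · simpa [image_subset_iff] using hpS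
  · simp only [forall_mem_image, Function.comp_apply]
    exact fun l hl => by rw [letter_p l hl]; exact hqS l hl
  · simp only [forall_mem_image, Function.comp_apply]
    intro l hl hmem
    rw [letter_p l hl] at hmem
    obtain ⟨l', hl', heq⟩ := mem_image.1 hmem
    obtain rfl : l' = l := by rw [← letter_p l' hl', heq, letter_q l hl]
    exact (hpq l' hl').2.2 heq
  · rw [coe_image]
    refine Set.InjOn.image_of_comp ((FiniteWord.injOn_pos_comp hqocc).of_comp.congr ?_)
    exact fun l hl => by simp only [Function.comp_apply, letter_p l hl]
  · simp only [forall_mem_image, Function.comp_apply]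
    intro l hl l' hl'
    rw [letter_p l hl, letter_p l' hl']
    rcases eq_or_ne l l' with rfl | hne
    · simp
    · rw [lt_iff_lt_of_mem_occ_rankWord hne (hpocc l hl) (hpocc l' hl'),
        lt_iff_lt_of_mem_occ_rankWord hne (hqocc l hl) (hqocc l' hl'),
        ← rankIn_lt_rankIn_iff (hpS l hl), ← rankIn_lt_rankIn_iff (hqS l hl)]
      exact congrArg₂ _ (propext (hord l hl l' hl').symm) rfl
  · exact card_image_of_injOn (FiniteWord.injOn_pos_comp hpocc).of_comp

theorem exists_hasColorTwins_card_le [Nonempty α] (hf : Set.InjOn f S) (hg : Set.InjOn g S)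
    (hh : 0 < h) {i j : ℕ} (hj : #S ≤ j * 8 ^ i) :
    ∃ k, HasColorTwins (fun e e' => (f e < f e', g e < g e')) S k ∧
      #S ≤ (3 * (h + 16 * 4 ^ i) + h) * k + 2 * j * (#S / h + 1) := by
  have hocc (a b l : ℕ) : #((rankWord hf g h).occ a b l) ≤ h := card_occ_rankWord_le hg hh l
  obtain ⟨U, hU, hcard⟩ := (FiniteWord.twinsAtScale_pow hocc i).exists_card_carrier_le hocc
    (A := range (#S / h + 1)) (fun e he => (rankIn_lt_card he).trans_le hj)
    (fun e he => mem_range.2 (Nat.lt_succ_of_le (Nat.div_le_div_right (rankIn_lt_card he).le)))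
  rw [card_range] at hcard
  exact ⟨#U, hU.hasColorTwins, hcard⟩

theorem exists_hasColorTwins_le_mul_pow (hf : Set.InjOn f S) (hg : Set.InjOn g S) {i : ℕ}
    (hi : 0 < i) (hlow : 32 ^ i ≤ #S) (hhigh : #S < 32 ^ (i + 1)) :
    ∃ k, HasColorTwins (fun e e' => (f e < f e', g e < g e')) S k ∧ 8 ^ i ≤ 2 ^ 14 * k := by
  have : Nonempty α := ⟨(card_pos.1 ((Nat.pow_pos (by norm_num)).trans_le hlow)).choose⟩
  have h32 : 32 ^ i = 8 ^ i * 4 ^ i := by rw [← mul_pow]; norm_num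
  have h8 : 8 ≤ 8 ^ i := Nat.le_self_pow hi.ne' 8
  let h := 512 * 4 ^ i
  have hh : 0 < h := by positivity
  let j := #S / 8 ^ i + 1
  have hj : #S ≤ j * 8 ^ i := (Nat.lt_mul_of_div_lt (Nat.lt_succ_self _) (by positivity)).le
  have hj' : j * 8 ^ i ≤ 2 * #S := by
    have : 8 ^ i ≤ #S := (Nat.pow_le_pow_left (by norm_num) i).trans hlow
    have := Nat.div_mul_le_self #S (8 ^ i)
    rw [Nat.succ_mul]
    omega
  have halphabet : 16 * (#S / h + 1) ≤ 3 * 8 ^ i := by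
    have : 16 * (#S / h) ≤ 8 ^ i := by
      refine Nat.le_of_mul_le_mul_right (c := 32 * 4 ^ i) ?_ (by positivity)
      calc 16 * (#S / h) * (32 * 4 ^ i) = #S / h * h := by ring
        _ ≤ #S := Nat.div_mul_le_self _ _
        _ ≤ 32 ^ (i + 1) := hhigh.le
        _ = 8 ^ i * (32 * 4 ^ i) := by rw [pow_succ, h32]; ring
    omega
  obtain ⟨k, hk, hcard⟩ := exists_hasColorTwins_card_le hf hg hh hj
  refine ⟨k, hk, ?_⟩
  have huncovered : 8 * (2 * j * (#S / h + 1)) ≤ 6 * #S := by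
    calc 8 * (2 * j * (#S / h + 1)) = j * (16 * (#S / h + 1)) := by ring
      _ ≤ j * (3 * 8 ^ i) := by gcongr
      _ = 3 * (j * 8 ^ i) := by ring
      _ ≤ 3 * (2 * #S) := by gcongr
      _ = 6 * #S := by ring
  refine Nat.le_of_mul_le_mul_right (c := 4 ^ i) ?_ (by positivity)
  calc 8 ^ i * 4 ^ i ≤ #S := h32.symm.trans_le hlow
    _ ≤ 4 * ((3 * (h + 16 * 4 ^ i) + h) * k) := by omega
    _ = 8384 * k * 4 ^ i := by simp only [h]; ring
    _ ≤ 2 ^ 14 * k * 4 ^ i := by gcongr; norm_num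

theorem exists_hasColorTwins_of_injOn (hf : Set.InjOn f S) (hg : Set.InjOn g S) (hS : 2 ≤ #S) :
    ∃ k, HasColorTwins (fun e e' => (f e < f e', g e < g e')) S k ∧ #S ^ 3 ≤ 2 ^ 85 * k ^ 5 := by
  rcases lt_or_ge #S 32 with hsmall | hlarge
  · refine ⟨1, hasColorTwins_one (by simp) hS, ?_⟩
    calc #S ^ 3 ≤ 32 ^ 3 := by gcongr
      _ ≤ 2 ^ 85 * 1 ^ 5 := by norm_num
  · let i := Nat.log 32 #S
    have hi : 0 < i := Nat.log_pos (by norm_num) hlarge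
    have hlow : 32 ^ i ≤ #S := Nat.pow_log_le_self 32 (by omega)
    have hhigh : #S < 32 ^ (i + 1) := Nat.lt_pow_succ_log_self (by norm_num) _
    obtain ⟨k, hk, hle⟩ := exists_hasColorTwins_le_mul_pow hf hg hi hlow hhigh
    refine ⟨k, hk, ?_⟩
    calc #S ^ 3 ≤ (32 ^ (i + 1)) ^ 3 := by gcongr
      _ = 2 ^ 15 * (8 ^ i) ^ 5 := by
        rw [← pow_mul, ← pow_mul, show 32 = 2 ^ 5 by norm_num, show 8 = 2 ^ 3 by norm_num,
          ← pow_mul, ← pow_mul, ← pow_add]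
        congr 1
        ring
      _ ≤ 2 ^ 15 * (2 ^ 14 * k) ^ 5 := by gcongr
      _ = 2 ^ 85 * k ^ 5 := by ring

end Permutations

section EdgeSystems

open Finset

variable {α κ V : Type*} [LinearOrder V]

/-- `x e i` is the `i`-th vertex of the edge `e` of an ordered matching: edges are listed
increasingly and are pairwise disjoint. -/
structure IsEdgeSystem [Preorder κ] (x : α → κ → V) : Prop where
  strictMono : ∀ e, StrictMono (x e)
  ne : ∀ e e', e ≠ e' → ∀ i j, x e i ≠ x e' j

/-- The relative position of the edges `e` and `e'`. Twins in an ordered matching are twins with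
respect to this colouring of the pairs of edges. -/
def interleaving (x : α → κ → V) (e e' : α) : κ → κ → Prop := fun i j => x e i < x e' j

/-- All pairs of edges in `S` form the same pattern `R`, up to exchanging the two edges. -/
def IsPatternClique (x : α → κ → V) (S : Finset α) : Prop :=
  ∃ R, ∀ e ∈ S, ∀ e' ∈ S, e ≠ e' → interleaving x e e' = R ∨ interleaving x e' e = R

theorem IsPatternClique.mono {x : α → κ → V} {S T : Finset α} (h : IsPatternClique x S)
    (hT : T ⊆ S) : IsPatternClique x T :=
  h.imp fun _ hR e he e' he' => hR e (hT he) e' (hT he')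

namespace IsEdgeSystem

variable [LinearOrder κ] {x : α → κ → V}

theorem comp_strictMono {ι : Type*} [Preorder ι] (hx : IsEdgeSystem x) {g : ι → κ}
    (hg : StrictMono g) : IsEdgeSystem fun e => x e ∘ g :=
  ⟨fun e => (hx.strictMono e).comp hg, fun e e' h i j => hx.ne e e' h (g i) (g j)⟩

theorem injective (hx : IsEdgeSystem x) (i : κ) : Function.Injective (x · i) := fun e e' h => by
  by_contra hne
  exact hx.ne e e' hne i i h

theorem interleaving_self (hx : IsEdgeSystem x) (e : α) :
    interleaving x e e = fun i j => i < j := by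
  ext i j
  exact (hx.strictMono e).lt_iff_lt

theorem interleaving_swap (hx : IsEdgeSystem x) {e e' : α} (h : e ≠ e') :
    interleaving x e e' = fun i j => ¬ interleaving x e' e j i := by
  ext i j
  exact ⟨fun hlt => hlt.asymm, fun hlt => (not_lt.1 hlt).lt_of_ne (hx.ne e e' h i j)⟩

theorem interleaving_eq_of_isPatternClique (hx : IsEdgeSystem x) {S : Finset α}
    (h : IsPatternClique x S) {e e' f f' : α} (he : e ∈ S) (he' : e' ∈ S) (hf : f ∈ S)
    (hf' : f' ∈ S) {i : κ} (hi : x e i < x e' i) (hi' : x f i < x f' i) :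
    interleaving x e e' = interleaving x f f' := by
  obtain ⟨R, hR⟩ := h
  have hne : e ≠ e' := fun h => hi.ne (by rw [h])
  have hne' : f ≠ f' := fun h => hi'.ne (by rw [h])
  rcases hR e he e' he' hne with h₁ | h₁ <;> rcases hR f hf f' hf' hne' with h₂ | h₂
  · rw [h₁, h₂]
  · have : interleaving x f' f i i := by rw [h₂, ← h₁]; exact hi
    exact absurd hi' this.asymm
  · have : interleaving x e' e i i := by rw [h₁, ← h₂]; exact hi'
    exact absurd hi this.asymm
  · rw [hx.interleaving_swap hne, hx.interleaving_swap hne', h₁, h₂]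

theorem interleaving_eq_of_lt_iff_lt (hx : IsEdgeSystem x) {S : Finset α}
    (h : IsPatternClique x S) {e e' f f' : α} (he : e ∈ S) (he' : e' ∈ S) (hf : f ∈ S)
    (hf' : f' ∈ S) (hne : e ≠ e') (hne' : f ≠ f') {i : κ} (hi : x e i < x e' i ↔ x f i < x f' i) :
    interleaving x e e' = interleaving x f f' := by
  rcases (hx.ne e e' hne i i).lt_or_gt with hlt | hgt
  · exact hx.interleaving_eq_of_isPatternClique h he he' hf hf' hlt (hi.1 hlt)
  · have hgt' : x f' i < x f i :=
      (not_lt.1 (hi.not.1 hgt.not_gt)).lt_of_ne (hx.ne f' f hne'.symm i i)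
    rw [hx.interleaving_swap hne, hx.interleaving_swap hne',
      hx.interleaving_eq_of_isPatternClique h he' he hf' hf hgt hgt']

theorem hasColorTwins_one (hx : IsEdgeSystem x) {S : Finset α} (hS : 2 ≤ #S) :
    HasColorTwins (interleaving x) S 1 :=
  _root_.hasColorTwins_one (fun e _ e' _ => by rw [hx.interleaving_self, hx.interleaving_self]) hS

end IsEdgeSystem

/-- A pattern clique in which a final segment `[b, ⊤]` of every edge lies, on the one hand, to the
right of the initial segments `[⊥, b)` of all edges and, on the other hand, entirely before or
entirely after the final segment of any other edge. -/
structure IsBlockClique [Preorder κ] [OrderTop κ] (x : α → κ → V) (S : Finset α) : Prop where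
  isPatternClique : IsPatternClique x S
  exists_tail : ∃ b, (∀ i < b, ∀ e ∈ S, ∀ e' ∈ S, x e i < x e' b) ∧
    ∀ e ∈ S, ∀ e' ∈ S, e ≠ e' → x e ⊤ < x e' b ∨ x e' ⊤ < x e b

theorem IsBlockClique.mono [Preorder κ] [OrderTop κ] {x : α → κ → V} {S T : Finset α}
    (h : IsBlockClique x S) (hT : T ⊆ S) : IsBlockClique x T :=
  ⟨h.isPatternClique.mono hT, h.exists_tail.imp fun _ hb =>
    ⟨fun i hi e he e' he' => hb.1 i hi e (hT he) e' (hT he'),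
      fun e he e' he' => hb.2 e (hT he) e' (hT he')⟩⟩

end EdgeSystems

section PopularNeighbour

open Finset

theorem exists_popular_neighbour {α τ : Type*} [Fintype τ] {A : Finset α}
    {G : α → τ → α → Prop} [∀ e t, DecidablePred (G e t)]
    (hG : ∀ e ∈ A, ∀ e' ∈ A, e ≠ e' → ∃ t, G e t e' ∨ G e' t e) (hA : 2 ≤ #A) :
    ∃ e ∈ A, ∃ t, #A ≤ 1 + 2 * Fintype.card τ * #{e' ∈ A | G e t e'} := by
  classical
  let N (p : α × τ) : Finset α := {e' ∈ A | G p.1 p.2 e'}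
  let pairs (p : α × τ) : Finset (α × α) := (N p).image (p.1, ·) ∪ (N p).image (·, p.1)
  have hcover : A.offDiag ⊆ (A ×ˢ univ).biUnion pairs := by
    rintro ⟨e, e'⟩ hee'
    obtain ⟨he, he', hne⟩ := mem_offDiag.1 hee'
    obtain ⟨t, ht | ht⟩ := hG e he e' he' hne
    · exact mem_biUnion.2 ⟨(e, t), by simp [he], by simp [pairs, N, he', ht]⟩
    · exact mem_biUnion.2 ⟨(e', t), by simp [he'], by simp [pairs, N, he, ht]⟩
  obtain ⟨e₁, he₁, e₂, he₂, hne⟩ := one_lt_card.1 hA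
  obtain ⟨t₁, -⟩ := hG e₁ he₁ e₂ he₂ hne
  obtain ⟨⟨e, t⟩, het, hmax⟩ :=
    exists_max_image (A ×ˢ univ) (fun p => #(N p)) ⟨(e₁, t₁), by simp [he₁]⟩
  refine ⟨e, (mem_product.1 het).1, t, ?_⟩
  have hpairs (p : α × τ) (hp : p ∈ A ×ˢ univ) : #(pairs p) ≤ 2 * #(N (e, t)) :=
    calc #(pairs p) ≤ #(N p) + #(N p) :=
          (card_union_le _ _).trans (Nat.add_le_add card_image_le card_image_le)
      _ ≤ 2 * #(N (e, t)) := by have := hmax p hp; omega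
  have hcount : #A * (#A - 1) ≤ #A * (2 * Fintype.card τ * #(N (e, t))) :=
    calc #A * (#A - 1) = #A.offDiag := by rw [offDiag_card, Nat.mul_sub_one]
      _ ≤ #(A ×ˢ (univ : Finset τ)) * (2 * #(N (e, t))) :=
        (card_le_card hcover).trans (card_biUnion_le_card_mul _ _ _ hpairs)
      _ = #A * (2 * Fintype.card τ * #(N (e, t))) := by
        rw [card_product, card_univ]
        ring
  have := Nat.le_of_mul_le_mul_left hcount (by omega)
  simp only [N] at this
  omega

end PopularNeighbour

section Splitting

open Finset

variable {α κ V : Type*} [LinearOrder κ] [LinearOrder V] {x : α → κ → V} {S T : Finset α}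
  {Z : Finset κ}

/-- The edges of `S` are split at each `z ∈ Z`: all their vertices with index below `z` lie to the
left of all those with index at least `z`. -/
def IsSplit (x : α → κ → V) (S : Finset α) (Z : Finset κ) : Prop :=
  ∀ z ∈ Z, ∀ e ∈ S, ∀ e' ∈ S, ∀ i < z, ∀ j ≥ z, x e i < x e' j

theorem IsSplit.mono (h : IsSplit x S Z) (hT : T ⊆ S) : IsSplit x T Z :=
  fun z hz e he e' he' => h z hz e (hT he) e' (hT he')

/-- The point `v` falls into the gap of the sequence `y` just before the index `z`. -/
def Separates (v : V) (y : κ → V) (z : κ) : Prop := (∀ j < z, y j < v) ∧ ∀ j ≥ z, v < y j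

theorem IsSplit.insert {v : V} {z : κ} (h : IsSplit x S Z)
    (hz : ∀ e ∈ S, Separates v (x e) z) : IsSplit x S (insert z Z) := by
  refine forall_mem_insert _ _ _ |>.2 ⟨fun e he e' he' i hi j hj => ?_, h⟩
  exact ((hz e he).1 i hi).trans ((hz e' he').2 j hj)

theorem exists_separates [Finite κ] {y : κ → V} {v : V} (hy : StrictMono y) (hv : ∀ j, y j ≠ v)
    (hi : y i < v) (hj : v < y j) : ∃ z, i < z ∧ z ≤ j ∧ Separates v y z := by
  obtain ⟨z, hz, hmin⟩ := Set.exists_min_image {j | v < y j} id (Set.toFinite _) ⟨j, hj⟩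
  refine ⟨z, hy.lt_iff_lt.1 (hi.trans hz), hmin j hj, fun k hk => ?_,
    fun k hk => hz.trans_le (hy.monotone hk)⟩
  exact (not_lt.1 fun h => (hmin k h).not_gt hk).lt_of_ne (hv k)

end Splitting

section BlockDecomposition

open Finset

variable {κ : Type*} [LinearOrder κ] [OrderBot κ] {Z : Finset κ} {i j : κ}

/-- The elements of `Z` cut the indices into blocks, each starting at `⊥` or at an element of `Z`;
this is the first index of the block of `i`. -/
def blockStart (Z : Finset κ) (i : κ) : κ := ({z ∈ Z | z ≤ i}).sup id

theorem blockStart_le : blockStart Z i ≤ i :=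
  Finset.sup_le fun _ hz => (mem_filter.1 hz).2

theorem le_blockStart {z : κ} (hz : z ∈ Z) (hzi : z ≤ i) : z ≤ blockStart Z i :=
  le_sup (f := id) (mem_filter.2 ⟨hz, hzi⟩)

theorem blockStart_mem (h : blockStart Z i ≠ ⊥) : blockStart Z i ∈ Z := by
  rcases ({z ∈ Z | z ≤ i}).eq_empty_or_nonempty with hempty | hne
  · exact absurd (by rw [blockStart, hempty, sup_empty]) h
  · obtain ⟨z, hz, hsup⟩ := exists_mem_eq_sup _ hne id
    rw [blockStart, hsup]
    exact (mem_filter.1 hz).1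

theorem blockStart_bot : blockStart Z ⊥ = ⊥ := bot_unique blockStart_le

theorem blockStart_blockStart : blockStart Z (blockStart Z i) = blockStart Z i := by
  rcases eq_or_ne (blockStart Z i) ⊥ with h | h
  · rw [h, blockStart_bot]
  · exact blockStart_le.antisymm (le_blockStart (blockStart_mem h) le_rfl)

variable {α V : Type*} [LinearOrder V] {x : α → κ → V} {S T : Finset α} {e e' e'' : α} {k : κ}

theorem IsSplit.lt_of_blockStart_lt (h : IsSplit x S Z) (he : e ∈ S) (he' : e' ∈ S)
    (hij : blockStart Z i < blockStart Z j) : x e i < x e' j := by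
  have hj := blockStart_mem (bot_le.trans_lt hij).ne'
  refine h _ hj e he e' he' i ?_ j blockStart_le
  by_contra! hle
  exact (le_blockStart hj hle).not_gt hij

/-- On the block of `k`, the edge `e` lies entirely to the left of `e'`. -/
def PrecedesOnBlock (x : α → κ → V) (Z : Finset κ) (k : κ) (e e' : α) : Prop :=
  ∀ i j, blockStart Z i = blockStart Z k → blockStart Z j = blockStart Z k → x e i < x e' j

theorem precedesOnBlock_blockStart :
    PrecedesOnBlock x Z (blockStart Z k) e e' ↔ PrecedesOnBlock x Z k e e' := by
  rw [PrecedesOnBlock, blockStart_blockStart, PrecedesOnBlock]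

theorem PrecedesOnBlock.lt (h : PrecedesOnBlock x Z k e e') : x e k < x e' k := h k k rfl rfl

theorem PrecedesOnBlock.trans (h : PrecedesOnBlock x Z k e e')
    (h' : PrecedesOnBlock x Z k e' e'') : PrecedesOnBlock x Z k e e'' :=
  fun i j hi hj => (h i k hi rfl).trans (h' k j rfl hj)

/-- The edges `e` and `e'` are comparable on every block, and `e` precedes `e'` on all blocks except
those starting in `E`, where the order is reversed. -/
def BlockLT (x : α → κ → V) (Z E : Finset κ) (e e' : α) : Prop :=
  ∀ k, if blockStart Z k ∈ E then PrecedesOnBlock x Z k e' e else PrecedesOnBlock x Z k e e'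

instance isStrictOrder_blockLT (x : α → κ → V) (Z E : Finset κ) :
    IsStrictOrder α (BlockLT x Z E) where
  irrefl e h := by
    have h := h ⊥
    rw [ite_self] at h
    exact h.lt.false
  trans e e' e'' h h' k := by
    have h := h k
    have h' := h' k
    split_ifs at h h' ⊢
    · exact h'.trans h
    · exact h.trans h'

theorem isBlockClique_of_isChain_blockLT [OrderTop κ] {E : Finset κ} (hS : IsSplit x S Z)
    (hchain : IsChain (BlockLT x Z E) (S : Set α)) : IsBlockClique x S := by
  have hinterleaving {e e'} (he : e ∈ S) (he' : e' ∈ S) (hlt : BlockLT x Z E e e') :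
      interleaving x e e' = fun i j => blockStart Z i < blockStart Z j ∨
        blockStart Z i = blockStart Z j ∧ blockStart Z i ∉ E := by
    ext i j
    rcases lt_trichotomy (blockStart Z i) (blockStart Z j) with hij | hij | hij
    · exact iff_of_true (hS.lt_of_blockStart_lt he he' hij) (.inl hij)
    · have hi := hlt i
      split_ifs at hi with hE
      · exact iff_of_false (hi j i hij.symm rfl).asymm (by simp [hij.not_lt, hE])
      · exact iff_of_true (hi i j rfl hij.symm) (.inr ⟨hij, hE⟩)
    · exact iff_of_false (hS.lt_of_blockStart_lt he' he hij).asymm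
        (by simp [hij.not_gt, hij.ne'])
  refine ⟨⟨_, fun e he e' he' hne =>
    (hchain he he' hne).imp (hinterleaving he he') (hinterleaving he' he)⟩, blockStart Z ⊤, ?_, ?_⟩
  · intro i hi e he e' he'
    refine hS.lt_of_blockStart_lt he he' ?_
    rw [blockStart_blockStart]
    exact blockStart_le.trans_lt hi
  · intro e he e' he' hne
    rcases hchain he he' hne with h | h <;> have h := h ⊤ <;> split_ifs at h
    · exact .inr (h ⊤ _ rfl blockStart_blockStart)
    · exact .inl (h ⊤ _ rfl blockStart_blockStart)
    · exact .inl (h ⊤ _ rfl blockStart_blockStart)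
    · exact .inr (h ⊤ _ rfl blockStart_blockStart)

theorem exists_blockLT_of_forall_precedesOnBlock
    (h : ∀ k, PrecedesOnBlock x Z k e e' ∨ PrecedesOnBlock x Z k e' e) :
    ∃ E ⊆ Z, BlockLT x Z E e e' ∨ BlockLT x Z E e' e := by
  classical
  wlog hbot : PrecedesOnBlock x Z ⊥ e e' generalizing e e'
  · exact (this (fun k => (h k).symm) ((h ⊥).resolve_left hbot)).imp fun E hE => ⟨hE.1, hE.2.symm⟩
  refine ⟨{z ∈ Z | ¬ PrecedesOnBlock x Z z e e'}, filter_subset _ _, .inl fun k => ?_⟩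
  simp only [mem_filter, precedesOnBlock_blockStart]
  split_ifs with hk
  · exact (h k).resolve_left hk.2
  · by_contra hnot
    have hmem : blockStart Z k ∉ Z := fun hZ => hk ⟨hZ, hnot⟩
    rw [← precedesOnBlock_blockStart, not_imp_comm.1 blockStart_mem hmem] at hnot
    exact hnot hbot

theorem exists_separates_of_not_precedesOnBlock [Finite κ] (hx : IsEdgeSystem x) (hne : e ≠ e')
    (h : ¬ PrecedesOnBlock x Z k e e') (h' : ¬ PrecedesOnBlock x Z k e' e) :
    ∃ z ∉ insert ⊥ Z, ∃ f, Separates (x e f) (x e') z ∨ Separates (x e' f) (x e) z := by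
  classical
  let b := blockStart Z k
  wlog hlt : x e b < x e' b generalizing e e'
  · have hgt : x e' b < x e b := (not_lt.1 hlt).lt_of_ne (hx.ne _ _ hne.symm _ _)
    obtain ⟨z, hz, f, hf⟩ := this hne.symm h' h hgt
    exact ⟨z, hz, f, hf.symm⟩
  simp only [PrecedesOnBlock, not_forall, not_lt] at h
  obtain ⟨i, j, hi, hj, hle⟩ := h
  have hbj : b ≤ j := hj.symm.trans_le blockStart_le
  obtain ⟨z, hbz, hzi, hz⟩ := exists_separates (hx.strictMono e) (fun l => hx.ne e e' hne l b) hlt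
    (((hx.strictMono e').monotone hbj).trans hle |>.lt_of_ne (hx.ne e' e hne.symm b i))
  refine ⟨z, ?_, b, .inr hz⟩
  rw [mem_insert, not_or]
  exact ⟨(bot_le.trans_lt hbz).ne', fun hzZ => ((le_blockStart hzZ hzi).trans hi.le).not_gt hbz⟩

theorem exists_split_insert [Fintype κ] (hx : IsEdgeSystem x) (hsplit : IsSplit x S Z)
    (hanti : ∀ E ∈ Z.powerset, IsAntichain (BlockLT x Z E) (S : Set α)) (hS : 2 ≤ #S) :
    ∃ z ∉ insert ⊥ Z, ∃ T ⊆ S, IsSplit x T (insert z Z) ∧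
      #S ≤ (1 + 2 * Fintype.card κ ^ 2) * #T := by
  classical
  let G (e : α) (t : κ × κ) (e' : α) : Prop :=
    t.1 ∉ insert ⊥ Z ∧ Separates (x e t.2) (x e') t.1
  have hG (e) (he : e ∈ S) (e') (he' : e' ∈ S) (hne : e ≠ e') : ∃ t, G e t e' ∨ G e' t e := by
    have hincomparable : ∃ k, ¬ (PrecedesOnBlock x Z k e e' ∨ PrecedesOnBlock x Z k e' e) := by
      by_contra! hcomparable
      obtain ⟨E, hEZ, hlt | hlt⟩ := exists_blockLT_of_forall_precedesOnBlock hcomparable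
      · exact hanti E (mem_powerset.2 hEZ) he he' hne hlt
      · exact hanti E (mem_powerset.2 hEZ) he' he hne.symm hlt
    obtain ⟨k, hk⟩ := hincomparable
    rw [not_or] at hk
    obtain ⟨z, hz, f, hf⟩ := exists_separates_of_not_precedesOnBlock hx hne hk.1 hk.2
    exact ⟨(z, f), hf.imp (⟨hz, ·⟩) (⟨hz, ·⟩)⟩
  obtain ⟨e, -, ⟨z, f⟩, hcard⟩ := exists_popular_neighbour hG hS
  rw [Fintype.card_prod, ← sq] at hcard
  let T : Finset α := {e' ∈ S | G e (z, f) e'}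
  have hT : T.Nonempty := by
    by_contra hempty
    rw [not_nonempty_iff_eq_empty] at hempty
    have : #S ≤ 1 + 2 * Fintype.card κ ^ 2 * #T := hcard
    rw [hempty, card_empty, mul_zero] at this
    omega
  refine ⟨z, (mem_filter.1 hT.choose_spec).2.1, T, filter_subset _ _,
    (hsplit.mono (filter_subset _ _)).insert fun e' he' => (mem_filter.1 he').2.2, ?_⟩
  calc #S ≤ 1 * 1 + 2 * Fintype.card κ ^ 2 * #T := by simpa only [one_mul] using hcard
    _ ≤ (1 + 2 * Fintype.card κ ^ 2) * #T := by
      rw [add_mul]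
      gcongr
      exact hT.card_pos

theorem card_le_of_isSplit [Fintype κ] [OrderTop κ] (hx : IsEdgeSystem x) {t : ℕ}
    (ht : ∀ C ⊆ S, IsBlockClique x C → #C ≤ t) (htpos : 0 < t) (d : ℕ) (hT : T ⊆ S)
    (hZ : #Z + d = Fintype.card κ) (hbot : ⊥ ∉ Z) (hsplit : IsSplit x T Z) :
    #T ≤ (1 + 2 * Fintype.card κ ^ 2) ^ d * t ^ (2 ^ Fintype.card κ - 2 ^ #Z) := by
  classical
  induction d generalizing T Z with
  | zero =>
    exact absurd hZ (card_lt_univ_of_notMem hbot).ne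
  | succ d ih =>
    set n := Fintype.card κ
    have hpow : 2 ^ (#Z + 1) ≤ 2 ^ n := Nat.pow_le_pow_right two_pos (by omega)
    rw [pow_succ] at hpow
    obtain ⟨A, hAT, hanti, hcard⟩ := exists_common_antichain_card_le_pow_mul (BlockLT x Z) (S := T)
      (t := t) Z.powerset fun E _ C hCT hC =>
        ht C (hCT.trans hT) (isBlockClique_of_isChain_blockLT (hsplit.mono hCT) hC)
    rw [card_powerset] at hcard
    rcases lt_or_ge #A 2 with hA | hA
    · calc #T ≤ t ^ 2 ^ #Z * #A := hcard
        _ ≤ t ^ (2 ^ n - 2 ^ #Z) * 1 := by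
          gcongr <;> omega
        _ ≤ (1 + 2 * n ^ 2) ^ (d + 1) * t ^ (2 ^ n - 2 ^ #Z) := by
          rw [mul_comm]
          gcongr
          exact Nat.one_le_pow _ _ (by omega)
    obtain ⟨z, hz, T', hT', hsplit', hcard'⟩ :=
      exists_split_insert hx (hsplit.mono hAT) hanti hA
    rw [mem_insert, not_or] at hz
    have hZ' : #(insert z Z) = #Z + 1 := card_insert_of_notMem hz.2
    have hbot' : ⊥ ∉ insert z Z := by
      rw [mem_insert, not_or]
      exact ⟨Ne.symm hz.1, hbot⟩
    have hrec := ih (hT'.trans (hAT.trans hT)) (by omega) hbot' hsplit'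
    rw [hZ', pow_succ 2] at hrec
    calc #T ≤ t ^ 2 ^ #Z * ((1 + 2 * n ^ 2) * #T') := hcard.trans (by gcongr)
      _ ≤ t ^ 2 ^ #Z * ((1 + 2 * n ^ 2) * ((1 + 2 * n ^ 2) ^ d * t ^ (2 ^ n - 2 ^ #Z * 2))) := by
        gcongr
      _ = (1 + 2 * n ^ 2) ^ (d + 1) * t ^ (2 ^ #Z + (2 ^ n - 2 ^ #Z * 2)) := by ring
      _ = (1 + 2 * n ^ 2) ^ (d + 1) * t ^ (2 ^ n - 2 ^ #Z) := by
        congr 2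
        omega

theorem exists_isBlockClique_card_le_mul_pow [Fintype κ] [OrderTop κ] (hx : IsEdgeSystem x)
    (S : Finset α) :
    ∃ C ⊆ S, IsBlockClique x C ∧
      #S ≤ (1 + 2 * Fintype.card κ ^ 2) ^ Fintype.card κ * #C ^ (2 ^ Fintype.card κ - 1) := by
  classical
  have hsubsingleton {C : Finset α} (hC : (C : Set α).Subsingleton) : IsBlockClique x C :=
    isBlockClique_of_isChain_blockLT (Z := ∅) (E := ∅) (by simp [IsSplit]) hC.isChain
  rcases S.eq_empty_or_nonempty with rfl | ⟨e, he⟩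
  · exact ⟨∅, subset_rfl, hsubsingleton (by simp), by simp⟩
  have hmem_singleton : {e} ∈ S.powerset.filter (IsBlockClique x) := by
    rw [mem_filter, mem_powerset, singleton_subset_iff]
    exact ⟨he, hsubsingleton (by simp)⟩
  obtain ⟨C, hC, hmax⟩ := exists_max_image _ card ⟨_, hmem_singleton⟩
  rw [mem_filter, mem_powerset] at hC
  refine ⟨C, hC.1, hC.2, ?_⟩
  simpa using card_le_of_isSplit (Z := ∅) hx
    (fun D hD hclique => hmax D (mem_filter.2 ⟨mem_powerset.2 hD, hclique⟩))
    (zero_lt_one.trans_le (hmax _ hmem_singleton)) (Fintype.card κ) subset_rfl (by simp) (by simp)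
    (by simp [IsSplit])

end BlockDecomposition

section BlockCliqueTwins

open Finset

variable {α V : Type*} [LinearOrder V] {d : ℕ} {x : α → Fin (d + 2) → V} {S : Finset α} {c : V}

theorem exists_hasColorTwins_of_last_separated (hx : IsEdgeSystem x)
    (hS : IsPatternClique (fun e => x e ∘ Fin.castSucc) S)
    (hc : ∀ e ∈ S, x e (Fin.last d).castSucc < c ∧ c ≤ x e (Fin.last (d + 1))) (hcard : 2 ≤ #S) :
    ∃ k, HasColorTwins (interleaving x) S k ∧ #S ^ 3 ≤ 2 ^ 85 * k ^ 5 := by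
  have hinit := hx.comp_strictMono Fin.strictMono_castSucc
  have before {e} (he : e ∈ S) (i : Fin (d + 1)) : x e i.castSucc < c :=
    ((hx.strictMono e).monotone (Fin.castSucc_le_castSucc_iff.2 i.le_last)).trans_lt (hc e he).1
  obtain ⟨k, ⟨A, φ, hφ, hA⟩, hk⟩ := exists_hasColorTwins_of_injOn (S := S)
    (hx.injective 0).injOn (hx.injective (Fin.last (d + 1))).injOn hcard
  refine ⟨k, ⟨A, φ, { hφ with map_color := fun e he e' he' => ?_ }, hA⟩, hk⟩
  rcases eq_or_ne e e' with rfl | hne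
  · rw [hx.interleaving_self, hx.interleaving_self]
  have hφe := hφ.map_mem e he
  have hφe' := hφ.map_mem e' he'
  have heS := hφ.subset he
  have heS' := hφ.subset he'
  obtain ⟨hfirst, hlast⟩ := Prod.mk.inj (hφ.map_color e he e' he')
  have hclique : interleaving (fun e => x e ∘ Fin.castSucc) (φ e) (φ e') =
      interleaving (fun e => x e ∘ Fin.castSucc) e e' :=
    hinit.interleaving_eq_of_lt_iff_lt hS hφe hφe' heS heS' (hφ.injOn.ne he he' hne) hne (i := 0)
      (iff_of_eq hfirst)
  funext i j
  induction i using Fin.lastCases with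
  | last =>
    induction j using Fin.lastCases with
    | last => exact hlast
    | cast j =>
      exact propext (iff_of_false ((before hφe' j).trans_le (hc _ hφe).2).asymm
        ((before heS' j).trans_le (hc _ heS).2).asymm)
  | cast i =>
    induction j using Fin.lastCases with
    | last =>
      exact propext (iff_of_true ((before hφe i).trans_le (hc _ hφe').2)
        ((before heS i).trans_le (hc _ heS').2))
    | cast j => exact congrFun₂ hclique i j

theorem interleaving_eq_of_lt_tail (hx : IsEdgeSystem x)
    (hS : IsPatternClique (fun e => x e ∘ Fin.castSucc) S) {b : Fin (d + 1)}
    (hb : ∀ i < b, ∀ e ∈ S, ∀ e' ∈ S, x e i.castSucc < x e' b.castSucc) {e e' f f' : α}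
    (he : e ∈ S) (he' : e' ∈ S) (hf : f ∈ S) (hf' : f' ∈ S)
    (hlt : x e (Fin.last (d + 1)) < x e' b.castSucc)
    (hlt' : x f (Fin.last (d + 1)) < x f' b.castSucc) :
    interleaving x e e' = interleaving x f f' := by
  have hclique := (hx.comp_strictMono Fin.strictMono_castSucc).interleaving_eq_of_isPatternClique
    hS he he' hf hf' (i := b) (((hx.strictMono e) (Fin.castSucc_lt_last b)).trans hlt)
    (((hx.strictMono f) (Fin.castSucc_lt_last b)).trans hlt')
  have last_lt_iff {e e'} (he : e ∈ S) (he' : e' ∈ S)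
      (hlt : x e (Fin.last (d + 1)) < x e' b.castSucc) (j : Fin (d + 2)) :
      x e (Fin.last (d + 1)) < x e' j ↔ b.castSucc ≤ j := by
    refine ⟨fun hj => ?_, fun hj => hlt.trans_le ((hx.strictMono e').monotone hj)⟩
    by_contra! hjb
    obtain ⟨j, rfl⟩ := Fin.exists_castSucc_eq.2 (hjb.trans (Fin.castSucc_lt_last b)).ne
    exact hj.asymm ((hb j (Fin.castSucc_lt_castSucc_iff.1 hjb) e' he' e he).trans
      (hx.strictMono e (Fin.castSucc_lt_last b)))
  funext i j
  induction i using Fin.lastCases with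
  | last => exact propext ((last_lt_iff he he' hlt j).trans (last_lt_iff hf hf' hlt' j).symm)
  | cast i =>
    induction j using Fin.lastCases with
    | last =>
      have lt_last {e e'} (hlt : x e (Fin.last (d + 1)) < x e' b.castSucc) :
          x e i.castSucc < x e' (Fin.last (d + 1)) :=
        (hx.strictMono e (Fin.castSucc_lt_last i)).trans
          (hlt.trans (hx.strictMono e' (Fin.castSucc_lt_last b)))
      exact propext (iff_of_true (lt_last hlt) (lt_last hlt'))
    | cast j => exact congrFun₂ hclique i j

theorem hasColorTwins_add_of_lt_tail (hx : IsEdgeSystem x)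
    (hS : IsPatternClique (fun e => x e ∘ Fin.castSucc) S) {b : Fin (d + 1)}
    (hb : ∀ i < b, ∀ e ∈ S, ∀ e' ∈ S, x e i.castSucc < x e' b.castSucc) {L R : Finset α}
    (hL : L ⊆ S) (hR : R ⊆ S) (hLR : ∀ e ∈ L, ∀ e' ∈ R, x e (Fin.last (d + 1)) < x e' b.castSucc)
    {k l : ℕ} (hk : HasColorTwins (interleaving x) L k) (hl : HasColorTwins (interleaving x) R l) :
    HasColorTwins (interleaving x) S (k + l) := by
  have hne {e e'} (he : e ∈ L) (he' : e' ∈ R) : e ≠ e' := fun h =>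
    (hx.strictMono e (Fin.castSucc_lt_last b)).asymm (h ▸ hLR e he e' he')
  refine hk.union (disjoint_left.2 fun e he he' => hne he he' rfl) hL hR ?_ hl
  intro e he f hf e' he' f' hf'
  have heq := interleaving_eq_of_lt_tail hx hS hb (hL he) (hR he') (hL hf) (hR hf')
    (hLR e he e' he') (hLR f hf f' hf')
  refine ⟨heq, ?_⟩
  rw [hx.interleaving_swap (hne he he').symm, hx.interleaving_swap (hne hf hf').symm, heq]

theorem pow_three_le_mul_add_pow_five {C m l r k k' : ℕ} (hl : m ≤ 3 * l) (hr : m ≤ 3 * r)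
    (hk : l ^ 3 ≤ C * k ^ 5) (hk' : r ^ 3 ≤ C * k' ^ 5) : m ^ 3 ≤ C * (k + k') ^ 5 := by
  wlog hkk' : k ≤ k' generalizing l r k k'
  · rw [add_comm]
    exact this hr hl hk' hk (le_of_not_ge hkk')
  calc m ^ 3 ≤ (3 * l) ^ 3 := by gcongr
    _ = 27 * l ^ 3 := by ring
    _ ≤ 32 * (C * k ^ 5) := by gcongr; norm_num
    _ = C * (2 * k) ^ 5 := by ring
    _ ≤ C * (k + k') ^ 5 := by gcongr; omega

theorem card_le_card_add_card_add_card {b : Fin (d + 1)}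
    (hb : ∀ e ∈ S, ∀ e' ∈ S, e ≠ e' → x e (Fin.last d).castSucc < x e' b.castSucc ∨
      x e' (Fin.last d).castSucc < x e b.castSucc) (c : V) :
    #S ≤ #{e ∈ S | x e (Fin.last (d + 1)) < c} + #{e ∈ S | c ≤ x e b.castSucc} +
      #{e ∈ S | x e (Fin.last d).castSucc < c ∧ c ≤ x e (Fin.last (d + 1))} + 1 := by
  classical
  have hamb : #{e ∈ S | x e b.castSucc < c ∧ c ≤ x e (Fin.last d).castSucc} ≤ 1 := by
    refine card_le_one.2 fun e he e' he' => ?_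
    rw [mem_filter] at he he'
    by_contra hne
    rcases hb e he.1 e' he'.1 hne with h | h
    · exact (he.2.2.trans_lt (h.trans he'.2.1)).false
    · exact (he'.2.2.trans_lt (h.trans he.2.1)).false
  have hcover : S ⊆ ({e ∈ S | x e (Fin.last (d + 1)) < c} ∪ {e ∈ S | c ≤ x e b.castSucc} ∪
      {e ∈ S | x e (Fin.last d).castSucc < c ∧ c ≤ x e (Fin.last (d + 1))}) ∪
      {e ∈ S | x e b.castSucc < c ∧ c ≤ x e (Fin.last d).castSucc} := by
    intro e he
    simp only [mem_union, mem_filter, he, true_and, ← not_lt]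
    tauto
  have h₁ := card_le_card hcover
  grind [card_union_le]

theorem exists_hasColorTwins_of_isBlockClique (hx : IsEdgeSystem x)
    (hS : IsBlockClique (fun e => x e ∘ Fin.castSucc) S) (hcard : 2 ≤ #S) :
    ∃ k, HasColorTwins (interleaving x) S k ∧ #S ^ 3 ≤ 2 ^ 91 * k ^ 5 := by
  induction hm : #S using Nat.strong_induction_on generalizing S with
  | h m ih =>
  rcases lt_or_ge m 16 with hsmall | hlarge
  · refine ⟨1, hx.hasColorTwins_one hcard, ?_⟩
    calc m ^ 3 ≤ 16 ^ 3 := by gcongr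
      _ ≤ 2 ^ 91 * 1 ^ 5 := by norm_num
  obtain ⟨b, hb, htail⟩ := hS.exists_tail
  obtain ⟨e₀, -, he₀⟩ := exists_rankIn_eq (S := S) (hx.injective (Fin.last (d + 1))).injOn
    (k := (m + 2) / 3) (by omega)
  let c := x e₀ (Fin.last (d + 1))
  let L : Finset α := {e ∈ S | x e (Fin.last (d + 1)) < c}
  let R : Finset α := {e ∈ S | c ≤ x e b.castSucc}
  let X : Finset α := {e ∈ S | x e (Fin.last d).castSucc < c ∧ c ≤ x e (Fin.last (d + 1))}
  have hL : #L = (m + 2) / 3 := he₀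
  have hLR : ∀ e ∈ L, ∀ e' ∈ R, x e (Fin.last (d + 1)) < x e' b.castSucc := fun e he e' he' =>
    (mem_filter.1 he).2.trans_le (mem_filter.1 he').2
  have hcover : #S ≤ #L + #R + #X + 1 := card_le_card_add_card_add_card htail c
  have hLS : L ⊆ S := filter_subset _ _
  have hRS : R ⊆ S := filter_subset _ _
  rcases le_or_gt m (3 * #R) with hR | hR
  · have hRm : #R < m := by
      obtain ⟨e, he⟩ : L.Nonempty := card_pos.1 (by omega)
      have heR : e ∉ R := fun heR =>
        (hx.strictMono e (Fin.castSucc_lt_last b)).asymm (hLR e he e heR)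
      exact hm ▸ card_lt_card ((ssubset_iff_of_subset hRS).2 ⟨e, hLS he, heR⟩)
    obtain ⟨k, hk, hkcard⟩ := ih #L (by omega) (hS.mono hLS) (by omega) rfl
    obtain ⟨l, hl, hlcard⟩ := ih #R hRm (hS.mono hRS) (by omega) rfl
    exact ⟨k + l, hasColorTwins_add_of_lt_tail hx hS.isPatternClique hb hLS hRS hLR hk hl,
      pow_three_le_mul_add_pow_five (by omega) hR hkcard hlcard⟩
  · have hX : m ≤ 4 * #X := by omega
    have hXS : X ⊆ S := filter_subset _ _
    obtain ⟨k, hk, hkcard⟩ := exists_hasColorTwins_of_last_separated hx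
      (hS.isPatternClique.mono hXS) (c := c) (fun e he => (mem_filter.1 he).2) (by omega)
    refine ⟨k, hk.mono hXS, ?_⟩
    calc m ^ 3 ≤ (4 * #X) ^ 3 := by gcongr
      _ = 64 * #X ^ 3 := by ring
      _ ≤ 64 * (2 ^ 85 * k ^ 5) := by gcongr
      _ = 2 ^ 91 * k ^ 5 := by ring

end BlockCliqueTwins

section OrderedMatchings

open Finset

variable {r n : ℕ} {M : Finset (Finset ℕ)}

theorem mem_mSupport {v : ℕ} : v ∈ mSupport M ↔ ∃ e ∈ M, v ∈ e := by
  simp [mSupport, mem_sup]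

theorem le_twinMax {k : ℕ} (h : HasTwins M k) : k ≤ twinMax M := by
  refine le_csSup ⟨#M, ?_⟩ h
  rintro _ ⟨M₁, _, hM₁, -, -, -, rfl, -⟩
  exact card_le_card hM₁

theorem exists_isOrderedMatching (hr : 0 < r) (n : ℕ) : ∃ M, IsOrderedMatching r n M := by
  let edge (k : ℕ) : Finset ℕ := Icc (r * k + 1) (r * (k + 1))
  have mem_edge {v k : ℕ} : v ∈ edge k ↔ 0 < v ∧ (v - 1) / r = k := by
    rw [mem_Icc, Nat.div_eq_iff hr, mul_comm k, mul_add_one]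
    omega
  have eq_of_mem {v k l : ℕ} (hk : v ∈ edge k) (hl : v ∈ edge l) : k = l :=
    (mem_edge.1 hk).2.symm.trans (mem_edge.1 hl).2
  have edge_injective : Function.Injective edge := fun k l h =>
    have hk : r * k + 1 ∈ edge k := left_mem_Icc.2 (by rw [mul_add_one]; omega)
    eq_of_mem hk (h ▸ hk)
  refine ⟨(range n).image edge, ⟨?_, ?_⟩, ?_, ?_⟩
  · rw [forall_mem_image]
    intro k _
    rw [Nat.card_Icc, mul_add_one]
    omega
  · simp only [forall_mem_image, disjoint_left]
    exact fun k _ l _ hkl v hv hv' => hkl (congrArg edge (eq_of_mem hv hv'))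
  · rw [card_image_of_injective _ edge_injective, card_range]
  · ext v
    simp only [mem_mSupport, exists_mem_image, mem_edge, mem_range, mem_Icc]
    rw [← mul_comm n r]
    have hlt := Nat.div_lt_iff_lt_mul hr (x := v - 1) (y := n)
    constructor
    · rintro ⟨_, hk, hv, rfl⟩
      exact ⟨hv, by omega⟩
    · rintro ⟨hv, hvn⟩
      exact ⟨_, hlt.2 (by omega), hv, rfl⟩

theorem exists_twinMax_eq_minTwins (hr : 0 < r) (n : ℕ) :
    ∃ M, IsOrderedMatching r n M ∧ twinMax M = minTwins r n := by
  obtain ⟨M, hM⟩ := exists_isOrderedMatching hr n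
  exact Nat.sInf_mem (s := {t | ∃ M, IsOrderedMatching r n M ∧ twinMax M = t}) ⟨_, M, hM, rfl⟩

namespace IsMatching

/-- The `i`-th smallest vertex of an edge of the matching. -/
noncomputable def vertex (hM : IsMatching r M) (e : M) : Fin r → ℕ :=
  (e : Finset ℕ).orderEmbOfFin (hM.1 e e.2)

theorem isEdgeSystem_vertex (hM : IsMatching r M) : IsEdgeSystem hM.vertex where
  strictMono _ := (orderEmbOfFin _ _).strictMono
  ne e e' hne i j := disjoint_iff_ne.1 (hM.2 e e.2 e' e'.2 (Subtype.coe_ne_coe.2 hne))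
    _ (orderEmbOfFin_mem _ _ i) _ (orderEmbOfFin_mem _ _ j)

theorem image_vertex (hM : IsMatching r M) (e : M) : univ.image (hM.vertex e) = e :=
  image_orderEmbOfFin_univ _ _

theorem mem_mSupport_image_val (hM : IsMatching r M) {A : Finset M} {v : ℕ} :
    v ∈ mSupport (A.image Subtype.val) ↔ ∃ e ∈ A, ∃ i, hM.vertex e i = v := by
  simp only [mem_mSupport, exists_mem_image]
  simp only [← hM.image_vertex, mem_image, mem_univ, true_and]

theorem exists_vertexMap (hM : IsMatching r M) (φ : M → M) :
    ∃ f : ℕ → ℕ, ∀ e i, f (hM.vertex e i) = hM.vertex (φ e) i := by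
  have hx := hM.isEdgeSystem_vertex
  have hinj : Function.Injective (Function.uncurry hM.vertex) := by
    rintro ⟨e, i⟩ ⟨e', j⟩ (h : hM.vertex e i = hM.vertex e' j)
    obtain rfl : e = e' := by_contra fun hne => hx.ne e e' hne i j h
    rw [(hx.strictMono e).injective h]
  exact ⟨Function.extend (Function.uncurry hM.vertex) (fun p => hM.vertex (φ p.1) p.2) 0,
    fun e i => hinj.extend_apply (fun p => hM.vertex (φ p.1) p.2) 0 (e, i)⟩

theorem matchIso_image_val (hM : IsMatching r M) {A : Finset M} {φ : M → M}
    (hφ : ∀ e ∈ A, ∀ e' ∈ A, ∀ i j,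
      hM.vertex e i < hM.vertex e' j → hM.vertex (φ e) i < hM.vertex (φ e') j) :
    MatchIso (A.image Subtype.val) ((A.image φ).image Subtype.val) := by
  obtain ⟨f, hf⟩ := hM.exists_vertexMap φ
  have f_strictMonoOn : StrictMonoOn f (mSupport (A.image Subtype.val)) := by
    intro v hv w hw hvw
    obtain ⟨e, he, i, rfl⟩ := hM.mem_mSupport_image_val.1 hv
    obtain ⟨e', he', j, rfl⟩ := hM.mem_mSupport_image_val.1 hw
    rw [hf, hf]
    exact hφ e he e' he' i j hvw
  have f_image (e : M) : (e : Finset ℕ).image f = φ e := by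
    rw [← hM.image_vertex, image_image, ← hM.image_vertex]
    exact image_congr fun i _ => hf e i
  refine ⟨f, ⟨?_, f_strictMonoOn.injOn, ?_⟩, f_strictMonoOn, ?_⟩
  · intro v hv
    obtain ⟨e, he, i, rfl⟩ := hM.mem_mSupport_image_val.1 hv
    exact hM.mem_mSupport_image_val.2 ⟨φ e, mem_image_of_mem φ he, i, (hf e i).symm⟩
  · intro v hv
    obtain ⟨_, hφe, i, rfl⟩ := hM.mem_mSupport_image_val.1 hv
    obtain ⟨e, he, rfl⟩ := mem_image.1 hφe
    exact ⟨hM.vertex e i, hM.mem_mSupport_image_val.2 ⟨e, he, i, rfl⟩, hf e i⟩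
  · rw [image_image, image_image]
    exact image_congr fun e _ => (f_image e).symm

theorem hasTwins (hM : IsMatching r M) {k : ℕ}
    (h : HasColorTwins (interleaving hM.vertex) univ k) : HasTwins M k := by
  obtain ⟨A, φ, hφ, rfl⟩ := h
  have hsub (B : Finset M) : B.image Subtype.val ⊆ M := image_subset_iff.2 fun e _ => e.2
  have hcard (B : Finset M) : #(B.image Subtype.val) = #B :=
    card_image_of_injective B Subtype.val_injective
  refine ⟨A.image Subtype.val, (A.image φ).image Subtype.val, hsub _, hsub _,
    disjoint_left.2 fun v hv hv' => ?_, hM.matchIso_image_val fun e he e' he' i j => ?_,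
    hcard A, (hcard _).trans (card_image_of_injOn hφ.injOn)⟩
  · obtain ⟨e, he, i, rfl⟩ := hM.mem_mSupport_image_val.1 hv
    obtain ⟨_, hφe', j, h⟩ := hM.mem_mSupport_image_val.1 hv'
    obtain ⟨e', he', rfl⟩ := mem_image.1 hφe'
    have hne : φ e' ≠ e := fun h => hφ.map_notMem e' he' (h ▸ he)
    exact hM.isEdgeSystem_vertex.ne _ _ hne j i h
  · exact (congrFun₂ (hφ.map_color e he e' he') i j).mpr

theorem exists_forall_card_pow_three_le (d : ℕ) :
    ∃ C : ℕ, 0 < C ∧ ∀ M, IsMatching (d + 2) M → 2 ≤ #M →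
      #M ^ 3 ≤ C * twinMax M ^ (5 * (2 ^ (d + 1) - 1)) := by
  let B := (1 + 2 * (d + 1) ^ 2) ^ (d + 1)
  let D := 2 ^ (d + 1) - 1
  refine ⟨B ^ 3 * (2 ^ 91) ^ D, by positivity, fun M hM hcard => ?_⟩
  have hx := hM.isEdgeSystem_vertex
  obtain ⟨S, -, hS, hMS⟩ := exists_isBlockClique_card_le_mul_pow
    (hx.comp_strictMono Fin.strictMono_castSucc) univ
  rw [Fintype.card_fin, card_univ, Fintype.card_coe] at hMS
  obtain ⟨k, hk, hSk⟩ : ∃ k, HasColorTwins (interleaving hM.vertex) univ k ∧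
      #S ^ 3 ≤ 2 ^ 91 * k ^ 5 := by
    rcases lt_or_ge #S 2 with hsmall | hlarge
    · refine ⟨1, hx.hasColorTwins_one (by simpa using hcard), ?_⟩
      calc #S ^ 3 ≤ 2 ^ 3 := by gcongr
        _ ≤ 2 ^ 91 * 1 ^ 5 := by norm_num
    · obtain ⟨k, hk, hSk⟩ := exists_hasColorTwins_of_isBlockClique hx hS hlarge
      exact ⟨k, hk.mono (subset_univ S), hSk⟩
  calc #M ^ 3 ≤ (B * #S ^ D) ^ 3 := by gcongr
    _ = B ^ 3 * (#S ^ 3) ^ D := by ring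
    _ ≤ B ^ 3 * (2 ^ 91 * twinMax M ^ 5) ^ D := by
      gcongr
      exact hSk.trans (by gcongr; exact le_twinMax (hM.hasTwins hk))
    _ = B ^ 3 * (2 ^ 91) ^ D * twinMax M ^ (5 * D) := by rw [mul_pow, pow_mul, mul_assoc]

end IsMatching

theorem inv_rpow_mul_rpow_le_of_pow_three_le {C n T : ℝ} {D : ℕ} (hC : 0 < C) (hn : 0 ≤ n)
    (hT : 0 ≤ T) (hD : D ≠ 0) (h : n ^ 3 ≤ C * T ^ (5 * D)) :
    (C ^ (1 / (5 * D) : ℝ))⁻¹ * n ^ ((3 : ℝ) / 5 * (1 / D)) ≤ T := by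
  have hn_pow : (n ^ 3) ^ (1 / (5 * D) : ℝ) = n ^ ((3 : ℝ) / 5 * (1 / D)) := by
    rw [← Real.rpow_natCast, ← Real.rpow_mul hn]
    congr 1
    push_cast
    field_simp
  have hT_pow : (T ^ (5 * D)) ^ (1 / (5 * D) : ℝ) = T := by
    rw [← Real.rpow_natCast, ← Real.rpow_mul hT, Nat.cast_mul, Nat.cast_ofNat,
      mul_one_div_cancel (by positivity), Real.rpow_one]
  rw [inv_mul_le_iff₀ (by positivity), ← hn_pow]
  calc (n ^ 3) ^ (1 / (5 * D) : ℝ) ≤ (C * T ^ (5 * D)) ^ (1 / (5 * D) : ℝ) := by gcongr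
    _ = C ^ (1 / (5 * D) : ℝ) * T := by rw [Real.mul_rpow hC.le (by positivity), hT_pow]

end OrderedMatchings

/-- Theorem 1.2 / `thm:deterministic`.
For every fixed `r ≥ 2` there is `c = c(r) > 0` such that for all `n ≥ 2`,
`t^(r)(n) ≥ c · n^{(3/5)·(1/(2^{r-1}-1))}`. -/
theorem deterministic_lower_bound :
    ∀ r : ℕ, 2 ≤ r → ∃ c : ℝ, 0 < c ∧ ∀ n : ℕ, 2 ≤ n →
      c * (n : ℝ) ^ (((3 : ℝ) / 5) * (1 / ((2 : ℝ) ^ (r - 1) - 1))) ≤ (minTwins r n : ℝ) := by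
  intro r hr
  obtain ⟨d, rfl⟩ := Nat.exists_eq_add_of_le' hr
  obtain ⟨C, hC, htwins⟩ := IsMatching.exists_forall_card_pow_three_le d
  set D := 2 ^ (d + 1) - 1 with hD
  have hD_cast : (2 : ℝ) ^ (d + 2 - 1) - 1 = D := by
    rw [hD, Nat.cast_pred (by positivity)]
    norm_num
  have hD_ne_zero : D ≠ 0 := Nat.sub_ne_zero_of_lt (Nat.one_lt_two_pow d.succ_ne_zero)
  refine ⟨((C : ℝ) ^ (1 / (5 * D) : ℝ))⁻¹, by positivity, fun n hn => ?_⟩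
  obtain ⟨M, ⟨hM, rfl, -⟩, hmin⟩ := exists_twinMax_eq_minTwins (Nat.succ_pos (d + 1)) n
  rw [hD_cast, ← hmin]
  exact inv_rpow_mul_rpow_le_of_pow_three_le (by positivity) (by positivity) (by positivity)
    hD_ne_zero (mod_cast htwins M hM hn)
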